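/- There exists a finite set S of 159 points in ℝ² and three points p, q, r ∈ S that are pairwise at distance √7 (forming an equilateral triangle of side √7), such that the unit-distance graph on S is 4-colorable and no proper 4-coloring c of this graph satisfies c p = c q = c r (i.e., {p,q,r} is a non-monochromatic triple with side √7). -/

import Mathlib

/-- A point is given by four integers `(a, b, c, d)`; it stands for the complex number
`((a + b √33) + i (c √3 + d √11)) / 36`. -/
abbrev Q4 : Type := ℤ × ℤ × ℤ × ℤ

/-- The point of the plane given by four integers. -/
noncomputable def pt (x : Q4) : EuclideanSpace ℝ (Fin 2) :=
  !₂[((x.1 : ℝ) + x.2.1 * √33) / 36, ((x.2.2.1 : ℝ) * √3 + x.2.2.2 * √11) / 36]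

/-- Rational part of `36 ^ 2 * dist ^ 2`. -/
def ratPart (x y : Q4) : ℤ :=
  (x.1 - y.1) * (x.1 - y.1) + 33 * ((x.2.1 - y.2.1) * (x.2.1 - y.2.1)) +
    3 * ((x.2.2.1 - y.2.2.1) * (x.2.2.1 - y.2.2.1)) +
    11 * ((x.2.2.2 - y.2.2.2) * (x.2.2.2 - y.2.2.2))

/-- Coefficient of `2 √33` in `36 ^ 2 * dist ^ 2`. -/
def irrPart (x y : Q4) : ℤ :=
  (x.1 - y.1) * (x.2.1 - y.2.1) + (x.2.2.1 - y.2.2.1) * (x.2.2.2 - y.2.2.2)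

/-- Computable test for distance one. -/
def unit (x y : Q4) : Bool :=
  decide (ratPart x y = 1296) && decide (irrPart x y = 0)

theorem dist_pt_sq (x y : Q4) :
    dist (pt x) (pt y) ^ 2 = ((ratPart x y : ℝ) + 2 * irrPart x y * √33) / 1296 := by
  have h3 : (√3 : ℝ) ^ 2 = 3 := Real.sq_sqrt (by norm_num)
  have h11 : (√11 : ℝ) ^ 2 = 11 := Real.sq_sqrt (by norm_num)
  have h33 : (√33 : ℝ) = √3 * √11 := by
    rw [← Real.sqrt_mul (by norm_num)]; norm_num
  rw [EuclideanSpace.dist_eq, Real.sq_sqrt (by positivity)]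
  simp only [Fin.sum_univ_two, Real.dist_eq, sq_abs]
  simp only [pt, ratPart, irrPart, h33]
  simp
  ring_nf
  simp only [h3, h11]
  ring

theorem irrational_sqrt33 : Irrational (√33 : ℝ) := by
  have h := (irrational_sqrt_natCast_iff (n := 33)).2 (by
    rintro ⟨k, hk⟩
    have : k < 6 := by nlinarith
    interval_cases k <;> simp at hk)
  exact_mod_cast h

theorem lin33 (a b c : ℤ) (h : (a : ℝ) + 2 * b * √33 = c) : a = c ∧ b = 0 := by
  have hb : b = 0 := by
    by_contra hb
    apply irrational_sqrt33
    refine ⟨((c - a : ℤ) : ℚ) / (2 * b : ℤ), ?_⟩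
    have hb' : (b : ℝ) ≠ 0 := by exact_mod_cast hb
    push_cast
    rw [div_eq_iff (by simpa using hb')]
    linarith
  subst hb
  refine ⟨?_, rfl⟩
  have : (a : ℝ) = c := by simpa using h
  exact_mod_cast this

theorem dist_eq_one_iff (x y : Q4) : dist (pt x) (pt y) = 1 ↔ unit x y = true := by
  have h := dist_pt_sq x y
  simp only [unit, Bool.and_eq_true, decide_eq_true_eq]
  constructor
  · intro h1
    rw [h1] at h
    exact lin33 _ _ 1296 (by push_cast; linarith)
  · rintro ⟨h1, h2⟩
    rw [h1, h2] at h
    have h4 : dist (pt x) (pt y) ^ 2 = 1 := by rw [h]; norm_num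
    exact (pow_eq_one_iff_of_nonneg dist_nonneg (by norm_num)).1 h4

theorem four_sq (a b c d : ℤ) (h : a * a + 33 * (b * b) + 3 * (c * c) + 11 * (d * d) = 0) :
    a = 0 ∧ b = 0 ∧ c = 0 ∧ d = 0 := by
  have ha := mul_self_nonneg a
  have hb := mul_self_nonneg b
  have hc := mul_self_nonneg c
  have hd := mul_self_nonneg d
  refine ⟨mul_self_eq_zero.1 ?_, mul_self_eq_zero.1 ?_, mul_self_eq_zero.1 ?_,
    mul_self_eq_zero.1 ?_⟩ <;> linarith

theorem pt_injective : Function.Injective pt := by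
  intro x y hxy
  have h := dist_pt_sq x y
  rw [hxy, dist_self] at h
  have h0 := (lin33 (ratPart x y) (irrPart x y) 0 (by push_cast; linarith)).1
  simp only [ratPart] at h0
  obtain ⟨h1, h2, h3, h4⟩ := four_sq _ _ _ _ h0
  refine Prod.ext (by omega) (Prod.ext (by omega) (Prod.ext (by omega) (by omega)))

theorem dist_sqrt7 (x y : Q4) (h1 : ratPart x y = 9072) (h2 : irrPart x y = 0) :
    dist (pt x) (pt y) = Real.sqrt 7 := by
  have h := dist_pt_sq x y
  rw [h1, h2] at h
  have h4 : dist (pt x) (pt y) ^ 2 = 7 := by rw [h]; norm_num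
  rw [← h4, Real.sqrt_sq dist_nonneg]

/-- The points of colour 0 in a proper 4-colouring. -/
def cls0 : List Q4 :=
  [(-18, 0, -18, 0), (-18, 6, 12, 0), (-15, -3, 3, -3), (-12, 6, 12, 6), (-9, 3, -9, 9), (-9, 3, -3,
  -9), (-9, 3, 3, 9), (-6, 0, -6, 12), (-3, -3, -9, -3), (-3, 3, 3, 3), (0, -6, -18, 0), (0, -6, -6,
  0), (0, 0, 12, 0), (0, 6, -18, 0), (3, -3, -3, -3), (6, 0, 0, 6), (6, 0, 12, 6), (9, 3, -3, 9),
  (9, 3, 3, -9), (9, 3, 33, 9), (12, 0, -6, -6), (12, 0, 0, 12), (12, 0, 6, 6), (15, -3, -9, 3),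
  (15, -3, 21, -3), (15, 3, 9, 3), (18, -6, -12, 0), (18, 0, 18, 0), (21, -3, 9, 3), (24, 0, 0, 12),
  (27, -3, -3, 9), (27, -3, 3, -9), (27, -3, 9, 9), (30, 0, 0, -6), (30, 0, 0, 6), (33, 3, -3, -3),
  (36, -6, 18, 0), (36, 0, -12, 0), (36, 6, 6, 0), (36, 6, 18, 0), (45, -3, 3, 9), (45, -3, 9, -9),
  (54, 0, -6, 0), (72, 0, 0, 0)]

/-- The points of colour 1 in a proper 4-colouring. -/
def cls1 : List Q4 :=
  [(-18, 0, -6, 0), (-18, 0, 18, 0), (-15, 3, -3, -3), (-12, 0, 6, 6), (-9, -3, 3, -9), (-6, 0, 0,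
  -6), (0, 0, -12, 0), (0, 6, 6, 0), (6, -6, 6, 6), (6, 0, 0, -6), (9, -3, -3, -9), (9, -3, 3, 9),
  (9, -3, 9, -9), (9, -3, 15, 9), (12, -6, 6, 12), (12, 0, 6, -6), (15, -3, 15, 3), (15, 3, -15, 3),
  (15, 3, 15, -3), (18, 0, -18, 0), (18, 6, 12, 0), (21, -3, -15, 3), (27, 3, -9, 9), (27, 3, -3,
  -9), (27, 3, 3, 9), (30, -6, 6, -6), (30, -6, 6, 6), (33, -3, -9, -3), (36, -6, -18, 0), (36, -6,
  -6, 0), (36, 0, 12, 0), (36, 0, 24, 0), (42, 0, 0, 6), (45, 3, -3, 9), (54, 0, 18, 0), (63, -3, 3,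
  -9)]

/-- The points of colour 2 in a proper 4-colouring. -/
def cls2 : List Q4 :=
  [(-9, -3, -9, -9), (-9, 3, -21, 9), (-9, 3, 9, -9), (-9, 3, 15, 9), (-3, 3, -9, 3), (-3, 3, -3, -3),
  (0, -6, 18, 0), (0, 0, 0, 0), (0, 0, 36, 0), (3, 3, -3, 3), (6, 0, -12, 6), (9, 3, -15, 9), (9, 3,
  15, -9), (12, -6, -12, -6), (12, 0, 12, 12), (12, 0, 18, -6), (12, 0, 18, 6), (15, -3, 9, -3),
  (18, -6, -24, 0), (18, 0, -6, 0), (18, 0, 6, 0), (21, -3, -3, 3), (21, -3, 3, -3), (24, 0, 18, 6),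
  (27, -3, -15, 9), (27, -3, 15, -9), (27, -3, 21, 9), (27, -3, 27, -9), (30, 0, 12, -6), (33, -3,
  -3, 3), (36, -6, 6, 0), (36, 6, -6, 0), (45, -3, -9, 9), (45, -3, 21, -9), (45, 3, 9, 9), (54, -6,
  0, 0), (54, -6, 12, 0), (54, 0, -18, 0), (63, 3, -3, -9)]

/-- The points of colour 3 in a proper 4-colouring. -/
def cls3 : List Q4 :=
  [(-27, 3, -3, 9), (-21, 3, 15, -3), (-18, 0, 6, 0), (-9, -3, -15, 9), (-9, -3, -3, 9), (-9, -3, 15,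
  -9), (-9, 3, -15, -9), (-6, 0, 0, 6), (-3, -3, -3, 3), (-3, -3, 3, -3), (0, -6, 6, 0), (0, 0, -24,
  0), (0, 6, -6, 0), (3, -3, -9, 3), (3, -3, 3, 3), (6, 0, -12, -6), (9, -3, -9, 9), (9, 3, 9, 9),
  (12, 0, -18, -6), (12, 6, 12, -6), (15, -3, 3, 3), (18, -6, 0, 0), (18, -6, 12, 0), (18, 0, 30,
  0), (18, 6, 0, 0), (21, 3, 3, 3), (21, 3, 9, -3), (27, -9, -9, 9), (27, -3, -9, -9), (27, 3, -21,
  9), (27, 3, 9, -9), (27, 3, 15, 9), (27, 3, 21, -9), (36, 0, 0, 0), (39, -3, -3, -3), (45, -3,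
  -15, -9), (45, -3, 15, 9), (45, 3, -15, 9), (45, 3, 15, -9), (54, 0, 6, 0)]

/-- All 159 points. -/
def allPts : List Q4 := cls0 ++ (cls1 ++ (cls2 ++ cls3))

/-- The colour of a point. -/
def colour (x : Q4) : Fin 4 :=
  if x ∈ cls0 then 0 else if x ∈ cls1 then 1 else if x ∈ cls2 then 2 else 3

/-- Neighbourhoods as bit masks. -/
def masks : List ℕ :=
  [174442565254829415342396024304914457952256, 351174061118400117318702912306647123623936,
  696983358050882887561022413810641884151808, 1993841994296343847445285539067985920,
  89850495603077173344879530166497103052800, 2722258935372615419442442919374118453248,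
  22300758490810584859257365227689302535700480, 92556803802515688072686101995976789065728,
  178405964246701136435070547790226795312185344, 170141183539697394543414431881621405696,
  1395163021287830839868049873307260340404224, 2831159926606649820278221032707556269621248,
  5663000418271347890227396635953293745455104, 11151776264028862920227575767765913595543552,
  11420769219868736143700912448900632343088201728, 5708991116423128569564505286169331020404359168,
  10633826660036871362300055759372681216, 1795256267548231042409397269331707551975211008,
  2865645800546482206609990464189538205916200960, 1432822879005602678367628141231131302507315200,
  713629290871177739921907615829802554738343936, 1449559326940254792560502201633454683053883392,
  44601493055603438113061588853022981024120832, 23819770876762550978446748514446729019392,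
  1020857495498046747475944936707446538240, 699620567158636934362822973757272161779712,
  267664068127127660179047167873813641061990400, 9993532331127398665205436410859865306092797952,
  22306189716725896517698002384565007816851456, 696983358694851790985789208114169154371584,
  51471513895558594454991693027074966624818692096, 29259971837341136631680181591774145738858037248,
  1430078842005233727798089193562228722950471680, 205546142719428619591098033380208656717572997120,
  148433760126490424510281663804734147387698708480, 332306999603962565425079514247987200,
  45673319963217674091534296024854470223378513920, 479755953234068593651107930169892234965163180032,
  6422614617197588652196445357652938556786606080, 187002898862278540353347822243690629844141342720,
  371085097001900730205692746060629854662766362624,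
  548241519960761376553198462095180995666089345024, 379038304498512536190810287612362752,
  5708990771322300022653469582365345079340564480, 1372427906281752147813115105116983136304,
  361550014972813260122520961423188689410, 85070591730234615865843651857942065156,
  5784800238924842419144883108111661924360, 22461294677844270399449638441657284165664,
  185114936833031493851382606629984595345408, 743227200020439558696413107076085542038548,
  87112285931760406224832088633858601521216, 340283665153609422198810415242938515456,
  5709687903055420864351510500064043416168694272, 11419375359490276343770537626815135755358439424,
  1481594742598570267745841983393000373485568, 181194235302958686782303162268413803280732160,
  45674800967730879978595803712596872551209111552, 89213869829945112042428936325811450268352512,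
  3055561433036619872977642472745887594379739392, 45671926336732548691596442112435386943748964352,
  91343874111252915327946706205653236913211965952, 182687704667692103071100074947941412388904960000,
  6065802694167152633649993019578794101667020801, 2140961373606404370992381103898482707789774858,
  5709175889748356507800451759482693867752423424, 87112309318012364299927126848667058700304,
  188586774445424708944067923595571991268217061408, 97063993476604538572888856602766493375071781440,
  680575442964051175323016101220283580416, 680569931209337862667295351363866722304,
  5444517872478034990727809146000618029312, 22837356879911827453458004222741433753448481792,
  5979387306444292693332006588596210879344674816, 230506077558334264442293048886997240356567846912,
  368274506208545339809603765258046592384881393664, 1427247692705990304672691446955139887714566144,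
  7493050386714077820843803581052650708061519872, 234068621603870891978217327712865972070549291008,
  388211372416405317615385360934773942622709874688, 178406004123540850249593679176213907149686816,
  356813290287483635050546773927935282430222337, 758225360676145110940700133541104651039936514,
  1427247693370573878950743905901433850895699970, 21950871122392100725207256769764486283264,
  523015327185478203259231861068330484924675, 2090716130010178478172940193089005172035588,
  5708994184281332699897105512124945595153909857, 35184523608064,
  16334218226202938704206103739349894955144, 22300745198530623141535718272789236433289536,
  91343895974394989998088241526933494969420226624, 182687704667692092771245520128532501724783448096,
  180009372101176447172752356629913657147392, 288230377493889152,
  348789426093961925049958973215707479670784, 85070591730234616160991592238846837248,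
  2365799433251900688640, 5444517870735015427229133298119259195392,
  190995048034852024526595864002629341777367040, 366104457500864957781692091207627890609604526080,
  22300755832354589420886313335519200567951360, 44623268468544186344734273112074771908001796,
  377793966344387080781824, 446014909287524445970458220344782620941352960,
  3570906846182363963097079744352677796574658560, 1427247692705959881058323748705618435084648448,
  2860070571711552417901993647471075113364881408, 590295810358975139840,
  2787763290999788361923706847678303070863360, 5708991451388573366110089694017633792320077824,
  5753594983479836138024074376875261646998601728, 91343895889324398267853787097769482819964239872,
  182687704666362864775461549153127761815623696384,
  411047422611602377505033024788607010958735310848,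
  365376803129300637714868163346739091187087441920,
  422468104634113941121145650598022513010088607744,
  131306787728948309057362309198576933380160487424,
  182687704666362864775461208700019150589754605568, 631059277838854021382799368,
  4990445787981438201567903752, 1267674778745199562207388500290, 20282412021540240296049945642001,
  2535455942961513608309104511056, 40564901414259101699460518907904, 1208925829747728336560129,
  81704042592979283717878988804, 649037126659667729329083771781633, 49556287197647558653207674880,
  1298074369377982813604100687532032, 633827717965753947598895457280,
  2596148584009937172807756177080370, 1595085742980395866380102008960, 618970057401432363480645632,
  5070621743728337564675245867008, 5192933159715020315117698748123136,
  20770455084739631159639635476353168, 9942206124978714028422463489, 39652767031510250272342409218,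
  77371252465470466424832004, 41540276421554938248208619984126976,
  83767619313691072029442170347866112, 162259276848102829323056591671296,
  1901475900785065960563840262144, 2536539140496320644716664193088,
  2601219036541808942192708842160128, 20282409613096691620063834275840,
  633826518632889754389363818752, 20282412172628260477071102443520,
  41832474662142761383737221447680, 81129648331594742466671851208704,
  202824096074296212563731868286976, 170047722272221390508102840771182592,
  249230249209671726187478239491932160, 166153499473723669389266214943981568,
  103845937171017674788481842114723840, 171345798807529687766015271847854080,
  342691597615380053731010358672359424, 145385579690217643669929101644267520]

/-- Neighbourhood of vertex `v`. -/
def nb (v : ℕ) : ℕ := masks.getD v 0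

/-- Vertex `v` as a point. -/
def vx (v : ℕ) : Q4 := allPts.getD v (0, 0, 0, 0)

theorem length_all : allPts.length = 159 := by decide +kernel

theorem nodup_all : allPts.Nodup := by decide +kernel

theorem indep0 : ∀ x ∈ cls0, ∀ y ∈ cls0, unit x y = false := by decide +kernel
theorem indep1 : ∀ x ∈ cls1, ∀ y ∈ cls1, unit x y = false := by decide +kernel
theorem indep2 : ∀ x ∈ cls2, ∀ y ∈ cls2, unit x y = false := by decide +kernel
theorem indep3 : ∀ x ∈ cls3, ∀ y ∈ cls3, unit x y = false := by decide +kernel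

theorem colour_proper (x y : Q4) (hx : x ∈ allPts) (hy : y ∈ allPts) (h : unit x y = true) :
    colour x ≠ colour y := by
  have i0 := indep0 x
  have i1 := indep1 x
  have i2 := indep2 x
  have i3 := indep3 x
  simp only [allPts, List.mem_append] at hx hy
  unfold colour
  intro hc
  split_ifs at hc <;> simp_all

theorem masks_length : masks.length = 159 := by decide +kernel

theorem masks_small : ∀ m ∈ masks, m < 2 ^ 159 := by decide +kernel

theorem masks_ok : ∀ v < 159, ∀ u < 159, (nb v).testBit u = true → unit (vx u) (vx v) = true := by
  decide +kernel

theorem nb_unit (u v : ℕ) (h : (nb v).testBit u = true) :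
    u < 159 ∧ v < 159 ∧ unit (vx u) (vx v) = true := by
  have hv : v < 159 := by
    by_contra hv
    have : nb v = 0 := by
      unfold nb
      rw [List.getD_eq_default]
      rw [masks_length]; omega
    simp [this] at h
  have hu : u < 159 := by
    by_contra hu
    have hm : nb v < 2 ^ 159 := by
      unfold nb
      rw [List.getD_eq_getElem _ _ (by rw [masks_length]; exact hv)]
      exact masks_small _ (List.getElem_mem _)
    have : (nb v).testBit u = false :=
      Nat.testBit_lt_two_pow (lt_of_lt_of_le hm (Nat.pow_le_pow_right (by norm_num) (by omega)))
    simp [this] at h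
  exact ⟨hu, hv, masks_ok v hv u hu h⟩

theorem vx_mem (v : ℕ) (h : v < 159) : vx v ∈ allPts := by
  unfold vx
  rw [List.getD_eq_getElem _ _ (by rw [length_all]; exact h)]
  exact List.getElem_mem _

/-- State of the search: for each of the colours the mask of the vertices
that are known not to have it. -/
structure Forb where
  a : ℕ
  b : ℕ
  c : ℕ
  d : ℕ

/-- Search trees: `s l t` assigns the (forced) vertices of `l` and continues with `t`;
`n v a b c d` branches over the colours of `v`. -/
inductive Cert where
  | z : Cert
  | s (l : List ℕ) (t : Cert) : Cert
  | n (v : ℕ) (t0 t1 t2 t3 : Cert) : Cert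

/-- One branching step. -/
def branch (v : ℕ) (k0 k1 k2 k3 : Forb → Bool) (f : Forb) : Bool :=
  (f.a.testBit v || k0 ⟨f.a ||| nb v, f.b, f.c, f.d⟩) &&
  ((f.b.testBit v || k1 ⟨f.a, f.b ||| nb v, f.c, f.d⟩) &&
  ((f.c.testBit v || k2 ⟨f.a, f.b, f.c ||| nb v, f.d⟩) &&
  (f.d.testBit v || k3 ⟨f.a, f.b, f.c, f.d ||| nb v⟩)))

/-- Assign a list of vertices in turn. -/
def runList (k : Forb → Bool) : List ℕ → Forb → Bool
  | [], f => k f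
  | v :: l, f => branch v (runList k l) (runList k l) (runList k l) (runList k l) f

/-- The checker. -/
def check : Cert → Forb → Bool
  | .z, _ => false
  | .s l t, f => runList (check t) l f
  | .n v t0 t1 t2 t3, f => branch v (check t0) (check t1) (check t2) (check t3) f

/-- `f` is consistent with the colouring `g`. -/
def Good (g : ℕ → Fin 4) (f : Forb) : Prop :=
  ∀ u, (f.a.testBit u = true → g u ≠ 0) ∧ (f.b.testBit u = true → g u ≠ 1) ∧
    (f.c.testBit u = true → g u ≠ 2) ∧ (f.d.testBit u = true → g u ≠ 3)

theorem branch_sound (g : ℕ → Fin 4) (hg : ∀ u v, (nb v).testBit u = true → g u ≠ g v)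
    (v : ℕ) (k0 k1 k2 k3 : Forb → Bool)
    (h0 : ∀ f, Good g f → k0 f = false) (h1 : ∀ f, Good g f → k1 f = false)
    (h2 : ∀ f, Good g f → k2 f = false) (h3 : ∀ f, Good g f → k3 f = false)
    (f : Forb) (hf : Good g f) : branch v k0 k1 k2 k3 f = false := by
  by_contra hb
  rw [Bool.not_eq_false] at hb
  simp only [branch, Bool.and_eq_true, Bool.or_eq_true] at hb
  obtain ⟨b0, b1, b2, b3⟩ := hb
  have key : ∀ i : Fin 4, i = 0 ∨ i = 1 ∨ i = 2 ∨ i = 3 := by decide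
  have hv := hf v
  rcases key (g v) with e | e | e | e
  · have h : f.a.testBit v ≠ true := fun h => hv.1 h e
    have hk := b0.resolve_left h
    rw [h0 _ ?_] at hk
    · simp at hk
    · intro u
      refine ⟨fun hu => ?_, (hf u).2⟩
      simp only [Nat.testBit_or, Bool.or_eq_true] at hu
      exact hu.elim (hf u).1 (fun hu => e ▸ hg u v hu)
  · have h : f.b.testBit v ≠ true := fun h => hv.2.1 h e
    have hk := b1.resolve_left h
    rw [h1 _ ?_] at hk
    · simp at hk
    · intro u
      refine ⟨(hf u).1, fun hu => ?_, (hf u).2.2⟩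
      simp only [Nat.testBit_or, Bool.or_eq_true] at hu
      exact hu.elim (hf u).2.1 (fun hu => e ▸ hg u v hu)
  · have h : f.c.testBit v ≠ true := fun h => hv.2.2.1 h e
    have hk := b2.resolve_left h
    rw [h2 _ ?_] at hk
    · simp at hk
    · intro u
      refine ⟨(hf u).1, (hf u).2.1, fun hu => ?_, (hf u).2.2.2⟩
      simp only [Nat.testBit_or, Bool.or_eq_true] at hu
      exact hu.elim (hf u).2.2.1 (fun hu => e ▸ hg u v hu)
  · have h : f.d.testBit v ≠ true := fun h => hv.2.2.2 h e
    have hk := b3.resolve_left h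
    rw [h3 _ ?_] at hk
    · simp at hk
    · intro u
      refine ⟨(hf u).1, (hf u).2.1, (hf u).2.2.1, fun hu => ?_⟩
      simp only [Nat.testBit_or, Bool.or_eq_true] at hu
      exact hu.elim (hf u).2.2.2 (fun hu => e ▸ hg u v hu)

theorem runList_sound (g : ℕ → Fin 4) (hg : ∀ u v, (nb v).testBit u = true → g u ≠ g v)
    (k : Forb → Bool) (hk : ∀ f, Good g f → k f = false) (l : List ℕ) :
    ∀ f, Good g f → runList k l f = false := by
  induction l with
  | nil => exact hk
  | cons v l ih => exact branch_sound g hg v _ _ _ _ ih ih ih ih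

theorem check_sound (g : ℕ → Fin 4) (hg : ∀ u v, (nb v).testBit u = true → g u ≠ g v)
    (t : Cert) : ∀ f, Good g f → check t f = false := by
  induction t with
  | z => intro f _; rfl
  | s l t ih => exact runList_sound g hg _ ih l
  | n v t0 t1 t2 t3 ih0 ih1 ih2 ih3 => exact branch_sound g hg v _ _ _ _ ih0 ih1 ih2 ih3

open Cert

def cert0 : Cert :=
  s [110, 157, 41, 62] (n 147 (s [26, 99, 67, 111, 118, 37, 42, 77, 40, 112, 104, 73, 146, 30] z) (s
  [67, 137, 111, 92, 131] (n 49 (s [133, 120, 65, 3] (n 119 (s [17, 83, 15, 150, 76] z) z (n 76 z (s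
  [15, 21, 128, 101, 144] (n 8 (s [97, 59] (n 12 (s [99, 83, 44, 1, 5, 121, 48, 82] z) z (s [56] (n
  72 (n 66 (s [99, 26] (n 17 (s [77, 143, 83, 150, 18, 32, 100, 68] z) (s [135, 81, 83, 122, 4, 50,
  91, 6] (n 54 (s [124] (n 61 (s [156, 34, 153, 155, 116] z) (s [156, 34, 153, 155, 116] z) z (n 126
  (s [34, 57, 153, 141, 14] z) (s [34, 96, 156, 68] z) (n 14 (n 155 (s [34, 116, 57, 60, 141, 109]
  z) z z (s [114, 57, 38, 86, 29, 2, 139, 53] (n 100 z (s [140, 158, 68, 71, 121, 36, 30, 116, 9, 1,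
  123, 153, 96, 11, 34, 60, 25, 84, 22, 127, 109, 141, 73, 105, 28, 149, 132, 75, 20, 44, 5, 48,
  102, 82, 145] z) (s [140, 149, 37, 68, 121, 105, 82, 156, 48, 36, 34, 102, 145, 22] z) (s [136,
  141, 18, 149, 37, 55, 71, 51, 73, 104, 103, 40, 82, 116, 28, 24, 158, 132, 75, 20, 113, 44, 79, 5,
  115, 48, 102, 36, 106, 140, 58, 30, 146] z)))) z z (s [141, 153, 73, 116] z)) z))) (s [11, 140,
  123, 30] z) z z)) z z)) z (s [37, 104] z) (s [37, 104] z)) z z (s [104, 37, 66, 73, 99, 136, 141,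
  30, 32, 100, 140] z))) z)) z (s [97, 16, 52] z) z)) z (s [103, 150, 39, 77, 40, 17, 55, 143, 81,
  99, 148, 26, 104] z)) z)) z (s [133, 95, 65, 26, 128, 99, 24, 12, 17, 103, 83, 15, 55, 122] z) z))
  (s [67, 111, 118, 79] (n 115 (s [40, 158] z) (s [40, 158] z) z (n 37 (s [72, 158, 104, 140, 40,
  55] z) z z (n 143 (s [99, 17, 26, 131, 77, 133, 135, 104, 5, 42, 112, 72, 148, 156, 101, 81, 91,
  119, 13, 83, 50, 12, 150, 56, 32, 39, 76, 129, 100, 18, 21, 48, 121, 151, 144, 59] z) z (s [100,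
  140, 158, 68, 36, 40, 38, 30, 155, 114] z) (s [99, 39, 66, 42, 17, 26, 150, 30, 131, 77, 135, 32,
  140, 5, 40, 68, 100, 54, 158, 136, 149, 12, 114, 55, 92, 38, 129, 51, 56, 18] z))))) z)

def cert1 : Cert :=
  s [154] (n 74 (s [157, 67, 113, 118, 62, 137, 111, 92, 79, 131] (n 99 z (s [42, 17, 77] z) z (n 17
  (s [77, 148, 150, 76, 103, 55, 40, 140, 104, 100, 66, 37] z) (s [143] (n 39 z z (s [150, 76, 103,
  55, 106, 36, 40, 75, 110, 158, 41] z) (s [150, 77, 83, 119, 3, 81, 120, 148, 49, 133, 65, 26, 135,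
  104, 147, 76, 55, 103, 15, 21, 106, 122, 58, 50, 146, 37, 91, 73, 66, 72, 144, 30, 6, 101, 68,
  140, 155, 123, 38, 36, 11, 114, 51, 115, 54, 40, 18, 158, 100, 75, 151, 28, 59] z))) z z))) cert0
  (s [110, 150, 32, 76] (n 131 z (s [1, 111, 17, 67, 83, 99, 119, 12, 143, 129, 44, 68, 55, 100,
  140, 141, 30, 57, 123] z) z (n 5 (n 77 (s [40, 17, 106, 55, 103, 104, 15, 21, 122, 133, 65] z) (s
  [111, 17, 67, 99, 118, 42, 143, 79, 68, 100, 37, 55, 158, 140, 115, 72] z) (s [40, 111, 106, 67,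
  92] (n 56 (s [129, 41, 55, 147, 17, 99, 140, 143, 100, 18] z) (s [12, 129, 55, 17, 148, 104, 122,
  21, 26, 101, 147, 144, 99, 37, 80, 143, 66, 50, 100, 136] z) (s [141, 100, 55, 129, 103, 104, 136,
  140, 12, 15, 122, 26, 4, 99, 17, 50, 135] z) z)) z) (s [67, 48, 137, 92, 129, 12, 56, 141, 100,
  105, 149, 55, 124, 103, 136, 82, 15, 121, 65, 122, 50, 4] z) z z))) (s [150] (n 39 (s [157, 67,
  62, 137, 111, 92, 131, 77, 17, 99, 83, 119, 3, 81, 120, 148, 49, 133, 26, 104, 147, 21, 55, 144,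
  37, 101, 66, 72, 30, 140] z) (s [157, 62] (n 138 (n 17 (s [77, 83, 111, 19, 67, 103, 99, 118, 15,
  42, 12, 143, 79] (n 129 z (s [110, 55, 40, 106] z) z (s [55, 26, 100, 140, 122, 147, 115, 104, 37,
  72] z))) (s [131, 77, 83, 119, 81, 148] (n 37 (s [104, 144, 72, 76, 55, 15, 21, 122, 101, 133, 50,
  26, 4, 99, 123, 12, 44] z) z (s [111, 144, 67, 21, 99, 101, 66, 143, 16, 104, 100, 55, 136, 32,
  50, 68, 4, 30, 44, 123] z) (s [104, 72, 55, 106, 140, 36, 100, 105, 136, 54, 66, 12, 99, 30] z)))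
  z (s [131, 1, 111, 67, 137, 118, 79] (n 144 (s [37, 21, 101, 76, 72, 103, 104, 55, 100, 40, 140,
  158, 115] z) z (n 72 (s [101, 37, 21, 104, 148, 77, 40, 106, 55, 158, 100, 115, 140] z) z (n 103
  (s [55, 140, 100, 136, 143, 68, 99, 32, 30, 135, 141, 66, 11, 50, 37, 122, 104, 15, 76] z) z z (s
  [76, 19, 24, 21, 83, 128, 101, 133, 104, 15, 93, 37, 26, 122, 66, 99, 81, 55, 135, 12, 30, 119,
  32, 129, 123, 48, 11, 44, 4, 20, 136, 50, 149, 51, 121, 38, 6, 68] z)) (s [37, 104, 148, 77, 40,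
  106, 115, 55, 140, 158, 100] z)) z))) (s [1, 67, 95, 137, 111, 92, 49, 131, 77, 133, 17, 99, 26,
  147, 41, 110, 56, 129] z) (s [1, 67, 95, 131, 83, 137, 111, 118, 128, 17, 49, 79, 15, 24, 133, 65,
  76, 103, 113, 55, 122, 106, 104, 36, 37, 75, 140, 66, 100, 136] z) z)) z z)))

def cert2 : Cert :=
  s [35, 89, 62] (n 154 z (n 33 (s [157, 92, 120, 49, 137, 95, 67, 5, 138, 111, 1, 131] z) z z (s
  [157, 92] (n 55 (s [103, 24, 128, 95] (n 1 (s [138, 67, 137, 49, 133, 65, 15, 76, 83, 21, 17, 150]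
  z) (s [138] (n 110 z (s [129, 40, 48, 106, 5, 150, 131, 77, 17] z) (s [40] (n 21 (s [133, 150, 74,
  17, 32, 101, 39, 149, 144, 100, 59, 136, 68, 151, 38, 105, 75, 18, 114, 51, 141, 36, 113, 143,
  158, 155, 69, 116, 28, 132, 73, 20, 11, 30, 54, 66, 124, 111, 67, 99, 137, 135, 140, 65, 86, 15,
  83, 12, 119, 44, 82, 57, 81, 5, 123, 145, 121, 122, 48, 6, 4, 102, 91, 50, 2, 139] z) (s [76, 104,
  15, 26, 133, 65, 137, 122, 67, 111, 131, 37, 66, 4, 136, 50, 100] z) (s [133, 104, 26] z) z)) z))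
  z z)) (s [100, 136, 140, 149] (n 32 (s [141, 150, 57, 74, 17, 39, 12, 110, 143, 99, 56, 41, 67,
  111, 147, 37] z) (s [110, 40, 74, 41, 158, 37, 114, 72, 115, 155, 36] z) (s [74, 141, 110, 150,
  41, 17, 56, 12, 83, 57, 1, 131, 82, 5, 111, 48, 37, 121, 73, 50, 11, 30, 135, 99] z) z)) z (s
  [100, 103, 136, 140, 149] (n 141 (s [105, 56, 74, 12] z) z (s [105, 56, 57, 129, 18, 12, 54, 124]
  z) (s [57, 12, 129, 74, 51, 56, 32, 105, 110, 18, 68, 150, 124, 41, 143, 82, 99, 1, 17, 147, 30,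
  67, 137, 138] (n 21 (s [101, 133, 104, 144, 65, 59, 26, 66, 122, 40, 121, 135, 37, 114, 4, 106,
  77, 158, 8, 73, 111, 50, 44, 79, 97, 131, 80, 91, 123, 113, 118, 36, 42, 5, 11, 86, 155, 112, 48,
  54, 116, 156, 153, 34, 14, 96, 102, 60, 126, 2, 25, 139] z) (s [101, 16, 123] z) (s [133, 104, 76,
  65, 15] z) z))))))) z (s [33, 157, 113, 92, 79, 120, 118, 49, 67, 137] z))

def cert3 : Cert :=
  s [149] (n 74 (s [38, 105, 150, 32] (n 39 z (s [157, 113, 36, 140, 55, 106, 136, 75, 114, 158, 40,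
  79, 115, 154, 33, 72, 62, 104, 103, 37, 76, 19, 24, 66, 21, 83, 128, 69, 111, 89, 15, 93, 67, 35,
  85, 137] z) z (s [157, 67, 143, 92, 18, 51, 56, 136, 41, 141, 114, 116, 155] z))) (s [38, 110, 68]
  (n 30 (s [155, 57, 136, 12, 55, 99, 140] z) (n 41 (s [157, 113] (n 75 (s [39, 150, 151, 32, 105,
  18, 141, 143, 56, 17, 131, 77, 83, 111, 12, 67, 99] z) z (s [39, 158, 143, 150, 151, 79, 114, 118,
  136, 67, 66, 55, 140, 99, 17, 26, 131, 83, 135, 147, 50] (n 8 (s [121, 59] z) z (s [121, 59] z) (s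
  [85, 128, 15] z))) (s [158, 114, 155, 36, 106, 140, 55] z))) z z (s [157, 92, 67, 56, 12, 18, 147,
  143, 99] z)) z z)) z (s [105] (n 114 (s [136, 155, 36, 140, 54, 124] (n 109 (s [60, 34, 153, 14,
  116, 141, 57, 12, 86] z) z (s [141, 57, 12, 86] z) (s [141, 60, 14, 34, 153] z))) (s [38, 155, 68,
  32, 30, 150] (n 40 (s [106, 55] z) z (s [110] (n 66 (s [99, 104, 67, 37, 111] z) z (s [99, 136,
  55, 104, 140, 37, 72, 154] z) (s [104, 37, 55, 106, 140, 99, 36, 143, 17, 113, 18, 131, 77, 83,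
  75, 111, 50, 151, 67, 135, 26, 147] (n 8 (s [121, 59] z) z (s [121, 59] z) (s [85, 128, 15] z)))))
  z)) (s [136, 55, 140, 36, 113, 155, 30, 66, 99, 17, 131] (n 148 (s [104, 77, 26, 150, 135, 32] z)
  z (s [104, 77, 81, 37, 40, 150, 73, 111, 50, 110, 32, 106, 83, 67, 135, 26, 75, 119, 147, 151, 89,
  35, 133, 59, 121, 1, 8, 85] z) (s [81, 122, 4, 50, 135, 32, 26, 91, 150, 13, 83, 125, 15, 119, 44,
  128, 65, 5, 12, 80, 24, 133, 48, 56, 89, 129, 20, 69, 132, 93] z))) z)))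

def cert4 : Cert :=
  n 147 (n 136 (n 54 (n 52 (s [97, 71, 11, 35, 73, 118, 89, 67, 20, 137, 92, 120, 49, 133, 65, 26, 99,
  146, 140, 30, 55, 68, 123, 101, 44, 57, 21, 12, 76, 56, 15, 18, 122, 143, 50, 17, 131, 135, 148,
  111, 91, 77, 156, 112] z) z z (s [97, 71] (n 30 (s [68] (n 8 z (s [59, 121, 6, 123, 51, 11, 18,
  50, 56, 80, 125] z) (n 6 (n 37 z (s [73, 154, 112, 79, 77, 156, 118, 91, 67, 135, 111, 99, 131,
  143, 17] z) z (s [156] (n 60 (n 11 z (s [73, 50, 112, 131, 135, 77, 111, 17, 66, 99] z) z (s [123,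
  101, 21, 76] (n 23 z (s [112, 70, 73, 34, 116, 153] z) (s [112, 70, 77, 34, 102, 155, 61, 134,
  114, 48, 66, 121, 4, 111, 50, 131] z) (s [61, 34, 155, 114] (n 44 (s [20, 89, 35, 118, 67, 137,
  92, 120, 49, 133, 65, 26, 99, 66, 130, 140, 4, 55, 122, 15, 83, 17, 143, 81, 13, 91, 135, 50, 80,
  125] z) z (s [4, 80, 50, 56, 131, 12, 99, 83, 17] z) (s [4, 66, 99, 67, 12, 5, 118, 83, 56, 131,
  92, 35, 17, 120, 89, 3, 119] z)))))) (s [34, 155] z) z (s [34, 155] z)))) z z (s [123, 51, 11, 18,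
  143, 56, 80, 125, 50, 131, 121, 91, 17, 48, 135, 5, 99, 44, 12] z)) z)) (s [68, 73, 143, 146, 99,
  26] z) (s [73, 37, 11, 146, 66, 26, 99, 140, 143, 55, 17, 135, 77, 83, 111, 50, 67, 122, 118, 81,
  35, 119, 89] z) z))) (s [11, 140, 97, 99, 71, 52, 67, 26, 137, 118, 35, 79, 89, 154, 133, 20, 37,
  65, 66, 15, 30, 122, 68, 123, 4, 44, 5, 12, 131, 92, 83, 56, 18, 17, 143] z) z z) (s [114, 55, 66,
  155, 140, 30, 99, 68, 12, 143, 26, 57, 92, 17, 123, 120, 77, 101, 44, 111, 21, 20, 67, 89, 137,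
  133, 49] z) z z) (s [67, 37, 56, 99, 137, 92, 140, 143, 26, 120, 55, 17, 49, 135, 133, 50, 65,
  122] z) z (s [37, 26, 73, 99, 112, 135] z)

def cert5 : Cert :=
  s [141] (n 41 (s [74, 38, 105, 110, 150, 68] (n 17 z (s [131, 77, 40, 111, 55, 67, 129, 104, 140,
  26, 54, 99] z) z (s [143, 99, 67, 140, 147, 92, 56, 12, 129, 57, 55, 26, 30, 135] (n 37 (s [104,
  111, 156, 122, 146, 131, 91, 81, 73, 13, 50, 4, 10, 11, 125, 123, 130, 80, 44] z) (s [73, 112] z)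
  z z)))) (s [110, 116, 74, 158, 150, 157, 40, 113, 77, 75, 36, 106, 105, 115, 55, 140, 79, 17, 54,
  118, 67, 42, 99, 147, 26] z) (s [74, 110, 38, 150] (n 85 z (s [128, 67, 95, 137, 92, 33, 49, 62,
  120] z) (s [128, 35, 67, 15, 157, 83, 62, 19, 103] z) (n 39 z (s [157, 113] (n 36 z z (s [105] (n
  33 (s [62] (n 129 (n 16 z z (n 144 z z (n 24 z z (s [128, 69, 95, 93, 137, 65, 67, 49, 15, 118,
  133, 89, 26, 35, 20, 99, 132, 101, 140, 54, 28, 21, 55, 75, 76, 58, 122, 106, 40, 104, 146, 73,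
  30, 11, 123] z) (s [69, 103] (n 93 z (s [128, 137, 15, 95, 65, 67, 76, 49, 118, 133, 35, 89] z) z
  (n 132 (s [20, 89] z) (n 104 (s [40] (n 72 z (s [37, 154] z) cert4 (s [37, 154] z))) z (s [40, 26,
  106, 75, 55, 28, 136, 140, 122, 115, 72, 158, 37, 79, 114, 116, 66, 73, 50, 147, 118, 112, 67,
  156, 99, 91, 135] z) (s [76, 55, 15, 122] z)) z z)))) (s [101, 21, 89, 133, 49, 26, 137, 104, 67,
  55, 99, 140] z)) (s [97, 52, 128, 15, 103, 83, 19] z)) z z (s [69, 24] z))) (s [137, 154, 67, 79,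
  118] z) z z)) (s [75, 106] z))) z (s [157, 67, 62, 137, 92, 33, 49, 89, 95, 133, 128, 21, 93, 101,
  20] z)))) (s [116, 56, 73, 158, 147] (n 99 z (s [67, 140, 30, 92, 54, 68, 155, 18, 57, 143, 12,
  17, 129, 55, 40] (n 50 (s [131, 135, 111, 91, 77, 156, 112] z) (s [11, 125, 80] z) z (s [37, 11,
  80, 122, 111, 123, 44, 4, 131] z))) (s [67, 74, 157] z) (s [140, 26, 30, 110, 155, 40, 57, 114,
  12, 136] z))))

def cert6 : Cert :=
  n 64 (n 85 z (s [128, 67, 15, 95, 137, 92, 33, 157, 62, 113, 103, 24] z) (s [1, 128, 35, 67, 131,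
  15, 95, 89, 137, 111, 118, 5, 83, 150, 19, 103, 24] (n 157 (s [33, 62] z) z z (s [113, 92, 79,
  154, 33, 69, 49] (n 26 (s [129, 110, 55, 40, 106, 17, 77] (n 32 (s [74, 41, 42, 56, 99, 147] z) (s
  [74, 36, 41, 12, 105, 75, 142, 56, 151, 107] z) z z)) z (s [110, 129, 55, 17, 99, 12, 143, 147,
  56, 100] z) (s [133, 21, 76, 104, 37, 55, 66, 144, 129, 100, 40, 17, 101, 140, 136, 99, 12, 114,
  74] z))))) (s [35, 89] (n 33 (s [62, 157, 118, 92, 67] z) (s [137, 62, 67, 157, 118] z) z cert1)))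
  z (n 85 z (s [128, 67, 15, 95, 137, 33, 62, 103, 24] z) (s [128, 67, 15, 95, 137, 111, 93, 65] (n
  24 z z (n 1 (n 5 (s [92, 157, 33, 49, 154, 62, 120, 89, 35, 103, 3, 133] (n 21 (s [150, 76, 19,
  104, 83, 122, 55, 17] z) (n 55 (n 17 z (s [83, 119] z) z (s [150] (n 66 z (s [37, 136, 104, 100,
  26, 149, 99, 147, 74, 41, 110] z) (s [99, 37, 104, 26] z) (s [104, 37, 40, 100, 110, 149, 47, 32,
  52, 74, 20, 41, 132, 71, 97] (n 26 (s [99, 135] z) z z (s [129, 48, 82, 12, 121, 56, 8, 59, 147]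
  z)))))) z z (s [100, 140, 37, 104, 26, 99, 147] z)) z z)) z z (s [131, 48, 92, 49, 157, 33, 120,
  113, 118, 62, 69, 79, 103, 129, 154, 55, 100, 136, 140, 149, 37, 121, 50, 82, 51, 12, 18, 74, 83,
  56, 143, 99, 36, 38, 150, 80, 66, 42, 17, 147, 26, 110, 114, 77, 115, 40] z)) (s [131, 83, 5, 92,
  157, 33, 49, 62, 120, 89, 103, 3, 19, 119, 150, 17] z) z z) (s [103, 113, 62, 69, 33, 35, 49, 89]
  z))) cert2) (n 100 z cert3 (s [149] (n 32 (s [68, 141, 150, 74] (n 12 (s [136, 83, 56, 57, 92, 51,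
  129, 30, 67, 18, 55, 99, 143, 17] z) (s [136, 83, 56, 51, 57, 129, 92, 18, 30, 55, 67, 99, 140,
  17, 147, 26, 54, 135, 11] z) (s [57, 92, 136, 155, 30, 157, 116, 67, 39, 113, 73, 41, 75, 110,
  158, 37, 66, 111, 104, 77, 40] z) z)) (s [68, 110, 38] (n 158 (s [40, 114, 74, 150, 155, 77, 116,
  30, 41, 157, 39, 143, 99, 17] z) (s [40, 114, 74, 41, 155, 116, 157, 141, 113, 36, 105] z) z (n 40
  (s [114, 136] (n 56 (s [41, 141, 92, 116, 57, 67, 155, 30, 74, 140, 105, 157, 36, 113] z) (s [41,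
  74, 116, 12, 155, 157, 57, 92, 67, 141, 147, 73, 26, 30, 99] z) z (s [141, 116, 73, 41, 30, 74,
  147, 140, 105, 155, 157, 67, 37, 55, 36, 113, 99, 118, 111, 112, 75, 115, 17, 54, 131, 156, 79,
  124, 34, 154, 86, 102, 33, 12, 145, 62, 82, 85, 1] z))) (s [114, 136, 74, 155, 116, 30, 41, 141,
  56, 57, 92, 12] z) z z))) z cert5)) z)

def cert7 : Cert :=
  s [154, 79] (n 62 (s [33, 157, 113, 118, 92, 67] (n 49 (s [95, 128] (n 74 (s [110, 41, 158, 100,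
  116, 75, 141, 105, 39, 36, 144, 140, 101, 115, 72] z) (n 100 z z (s [149] (n 68 (s [32, 38, 141,
  150, 105, 39, 36, 151, 75, 155, 158, 114] z) (s [143, 156, 99, 30, 140, 155, 36, 57, 105, 141, 54,
  32, 11, 18, 124, 110, 56, 41, 147, 116, 80, 26, 73, 129, 112, 69, 12, 48, 135, 24, 82, 50, 103, 1,
  51, 131, 83, 136, 17, 55] z) z z)) (s [149, 158, 75, 36, 105, 115, 141, 40, 32, 110] z)) (s [110,
  149, 150, 41, 100, 105, 32, 158, 141, 68, 75, 116, 38, 36, 114, 140, 155, 115, 30, 72, 73, 104,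
  11, 66, 146, 26, 99, 135] z) z)) z z (s [137, 120, 89, 85, 35] z))) (s [33, 157, 113, 118, 92, 67]
  (n 74 (s [110, 41, 158, 100, 116, 75, 141, 105, 36, 140, 155, 115, 114, 30, 40, 72, 73, 104, 146,
  26] z) (n 100 z z (s [149] (n 68 (s [32, 38, 141, 150, 105, 39, 36, 151, 75, 155, 158, 114] z) (s
  [143, 156, 99, 30, 140, 155, 36, 57, 105, 141, 54, 32, 11, 18, 124, 110, 56, 41, 147, 116, 80, 26,
  73, 129, 112, 12, 48, 135, 82, 50, 1, 51, 131, 83, 136, 17, 55] z) z z)) (s [149, 158, 75, 36,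
  105, 115, 141, 40, 32, 110] z)) (s [110, 149, 150, 41, 100, 105, 32, 158, 141, 68, 75, 116, 38,
  36, 114, 140, 155, 115, 30, 72, 73, 104, 11, 66, 146, 26, 99, 135] z) z)) z (s [35, 85, 89, 1] (n
  15 (s [128, 103, 24] z) z (s [128, 95] (n 104 z z (s [72] (n 40 (s [110, 115, 158] (n 99 (s [67,
  140, 111, 100, 131, 77, 143, 17] z) (s [66, 114, 136, 55, 106, 17, 122, 150, 83, 148, 119, 81] z)
  (s [140, 30, 66, 114, 136, 55, 100, 106, 122, 68, 36, 150, 50, 74, 32, 131, 91, 135, 17] z) (s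
  [66, 26, 111, 133, 67, 77, 157, 17, 33, 74, 118, 83, 148, 49, 42, 12, 119, 112, 136, 92, 81, 32,
  100, 55, 5, 122, 135, 140, 131, 44, 50, 10, 130] z))) (s [158, 100, 115, 140, 55, 103, 76, 150,
  77, 19, 148, 17, 81, 83, 119] z) z z)) (s [122, 76, 55, 103] z))) z)))

def cert8 : Cert :=
  n 37 cert7 (s [111, 67] (n 141 (s [73, 147] (n 74 (s [110, 41, 56, 157, 92] z) (s [99, 157, 26, 113,
  92, 110, 56, 32, 41, 100, 135, 112, 150, 149, 158, 42, 77, 39, 105, 75, 40, 36, 106] z) (s [105,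
  149] z) (s [105, 149] z))) z (s [100, 73, 149] (n 55 (s [140, 30, 99, 17, 147, 77, 143, 26, 68,
  135, 110, 32, 156, 112] z) (s [136] (n 40 (s [77, 110, 158, 79, 113, 115, 154, 75] (n 62 (s [103]
  (n 36 z z (s [106, 150, 76, 19, 83, 15, 17, 122, 131, 104, 1, 4, 5, 66, 48, 92, 114, 129, 102, 38,
  12, 145, 82, 51] z) (s [105, 106, 74, 150, 38, 114, 155, 157, 66, 57, 33, 92, 12, 56, 129, 69, 48,
  26, 24] (n 15 (s [128, 95, 49, 133, 89] z) (s [76, 83, 35, 1, 85, 128, 137, 93] z) (s [76, 83,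
  122, 1, 4, 104, 121, 123, 72, 21, 6, 101, 144] z) z)))) (s [33, 157] z) z (s [33, 157] z))) z (s
  [110, 158, 32, 129, 74, 26, 114, 150, 157, 99, 38, 39, 143, 68] z) z)) z z)) (s [100, 149] (n 50
  (s [11] (n 32 (s [68, 110, 143, 74, 99, 135, 147, 30, 112, 73] z) (s [68, 156, 91, 135] (n 41 (s
  [74, 110] z) (s [116, 56, 157, 73, 158, 113, 112, 147, 30, 79, 75, 99, 155, 118, 42, 74, 36, 105]
  z) (s [74, 110] z) (s [147, 158, 99, 73, 26, 143, 17, 112, 110, 77, 40] z))) z z)) z z (s [131, 1,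
  5, 48, 82, 121] z))))) (s [100, 111, 149, 131] (n 17 (s [77, 55, 148, 40, 104] z) (s [55, 104,
  140, 66, 99, 30, 73, 141, 146, 147, 26, 56, 110, 18, 40, 41, 54, 158, 116, 105, 115, 153, 14, 109,
  127] (n 75 z (s [36, 74, 155, 38, 12, 114, 57, 51, 136, 124, 123, 4, 82, 53, 86, 122, 48, 139, 50,
  102, 2] z) (s [106, 107, 151, 150, 76, 77, 83, 103, 21, 148, 15, 58, 81, 122, 28, 119, 65, 144,
  59, 89, 133] z) z)) z z)) (s [100, 154, 149] (n 32 (s [68, 141, 110, 74] (n 115 (s [40, 158] z) (s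
  [40, 158] z) (s [79, 113, 36, 157, 75, 41, 158] z) (s [140, 36, 30, 105, 99, 57, 54, 12, 124] z)))
  (s [68, 156] (n 41 (s [74, 110] z) (s [158, 116, 141, 105, 56, 74, 92, 110, 12, 40, 129, 136, 55]
  z) (s [74, 110] z) (n 157 (s [74, 113, 105, 110, 150, 79, 36, 39, 75, 106, 158, 40] z) (s [33, 62]
  (n 150 z z (s [74, 39, 105, 151, 75, 36, 158, 155, 116] z) (n 99 (s [67, 140, 17, 111, 55, 66,
  104] z) (s [143, 17, 30, 66, 104, 72, 76, 103, 21, 55, 101, 40, 136, 74, 144, 110, 158, 57, 105,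
  12, 6, 114, 116, 141, 83, 91, 38, 73, 1, 11, 135, 51, 26, 82, 121, 129, 48] z) (s [67, 74, 30,
  147, 105, 110, 66, 155, 56, 104, 34, 36, 141, 72, 76, 102, 101, 21, 144, 6, 123, 91, 11, 57, 50,
  135, 121, 26, 1, 82, 48, 51, 129, 136, 12] z) (s [140, 143, 17, 135, 26, 91, 104, 6, 72, 76, 21,
  101, 144] z)))) z z))) z (s [141, 150, 105] (n 131 z (s [1, 111, 67, 5, 48, 92, 82, 124, 12, 129,
  56] z) z (n 5 (s [67, 48, 111, 92, 77, 56, 17, 129, 147, 83, 12, 110, 99, 26] z) (n 67 (n 12 (s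
  [124, 83, 82, 1] z) (s [136, 74, 83, 56, 110, 17, 129, 55] z) (s [92, 56, 157, 147, 74, 73, 41,
  116] z) (s [136, 56, 51, 147, 18, 99, 143] z)) z (s [111, 92, 77, 56, 17, 147, 99, 140, 26, 55,
  110, 129] z) z) z z)))))

def cert9 : Cert :=
  n 67 (s [99, 111, 92, 17, 147, 12, 157, 77, 150, 74, 41, 110] z) z (n 38 (s [74, 51, 105, 114, 12,
  54, 99, 92, 30, 155, 36, 116, 113, 157, 41, 118, 42, 79, 115, 158] z) (n 54 (s [99, 105, 11, 17,
  30, 74, 124, 150, 123, 12, 110, 51, 6, 82, 121, 50, 4, 135, 122, 125, 26, 91, 104, 13, 76, 148,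
  103, 21, 81, 15, 89, 83, 119] z) z z (n 1 (n 150 (s [74, 106, 17, 39, 105, 110, 99, 131, 77, 83,
  75, 40, 12, 30, 36, 113, 151, 158, 51, 92, 157, 79, 5, 41, 154, 44, 107, 147, 33, 4, 142, 37, 80,
  26, 137, 62, 123, 19, 72, 50, 104, 49, 85, 35, 103, 101, 6, 16, 122, 15, 120, 89, 20, 121, 128,
  65, 3, 133, 52, 24, 93, 47, 97, 69, 132, 71, 8, 108, 28, 59] z) z z (n 104 (n 21 z (s [76] (n 15
  (s [128, 103, 24, 19, 113, 62, 83, 69, 35, 17, 85, 118, 89, 99, 137, 157, 30, 33, 93, 92, 49, 12,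
  133, 120, 26, 3, 135, 110, 47, 91, 41, 74, 116, 105] (n 121 z (s [6, 50, 123, 13, 125, 11, 16, 80,
  97, 101, 71, 144, 59, 8, 147] z) (s [50, 131, 11, 13, 5, 80, 125] z) (s [6, 123, 101, 16, 52, 97,
  71, 8, 132, 147, 90, 7, 20, 37, 144, 108, 73, 28, 59, 94, 151, 58, 75, 106] z))) (s [83, 85, 122,
  35, 137, 138, 62, 65, 89, 133, 49, 26, 33, 120, 92, 157, 12, 74, 113, 99, 101, 39, 105, 147, 144,
  75, 59, 151] z) z z)) (s [76, 103, 15, 128, 122, 65, 133, 89, 35, 85, 62] z) z) z (s [122, 76,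
  103, 21, 15, 89, 83, 17, 119, 148, 81] z) z)) (s [85, 35, 137, 138, 89, 62, 95, 103, 128, 49, 133,
  120, 92, 157, 65, 12, 74, 113, 99, 82, 83, 39, 105, 110, 24, 17, 121, 15, 75, 36, 26, 69, 150, 59,
  106, 76, 28, 104, 58, 21] z) z z)) z z) z

def cert10 : Cert :=
  s [149] (n 17 (s [55, 150, 136] (n 40 (s [106, 110, 74, 32, 141, 105, 57, 155, 36] z) z (s [77, 110,
  111, 129, 67, 48, 26, 143, 99, 18, 135, 54, 32, 68, 74, 141, 38, 12, 114, 11, 124, 83, 56, 57,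
  155, 1, 19, 147, 86, 80, 50, 139, 2] (n 49 (s [133, 89] z) (s [137, 33, 85, 157, 62] z) (s [95,
  128, 15, 24, 103, 62, 35, 157, 85, 89, 33, 41, 113, 92, 120, 133, 97, 69, 3, 52, 47, 16] (n 144 (s
  [39, 101, 75, 151, 28, 158, 105, 36, 102, 115, 37, 72, 73, 30, 140] z) z (s [37, 59, 90, 121, 8]
  z) (s [6, 101, 123] z))) (s [133, 89] z))) z)) (s [55, 136, 140] (n 37 (s [154, 111, 79, 158, 40,
  106, 77, 150] z) (s [111, 67, 131, 77, 143, 40, 99, 18, 66, 147, 4, 104, 56, 26, 50, 72, 12, 110,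
  122, 125, 154, 83, 92, 80, 79, 15, 5, 128, 48, 95, 129, 33, 24, 157, 113] z) (s [104, 66, 99, 30,
  73, 141, 146, 147, 26, 56, 110, 12, 41, 74, 32, 38, 68] z) z)) z (s [150] (n 12 (s [136, 92, 51,
  55, 140, 99, 30] (n 62 (s [35, 157, 33, 118, 154, 67, 111, 37, 66, 104] z) (s [103, 157, 24, 33,
  67, 128, 154, 137, 85, 95, 35, 49, 89, 133, 21, 76, 104, 66, 72, 37] z) z (s [35, 103, 89, 24,
  128, 15, 95, 76, 85, 104, 1, 66, 40, 148, 131, 138, 77, 5, 111, 67, 37, 137, 143, 73, 93, 18, 56,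
  141, 20, 132, 98, 11, 80, 123, 44, 125, 4, 50] z))) (s [136, 51, 55, 82, 124] (n 1 (s [131, 121,
  111, 6, 67, 99, 140, 86, 30, 57, 123, 4, 44] z) (s [131, 121, 111, 6, 48, 77, 129, 40, 148, 56,
  110, 141, 32, 74, 26, 104, 66, 37, 154, 147, 72, 79, 41, 115, 158, 157, 33, 39, 118, 101, 62, 95,
  75, 144, 35, 85, 128, 151, 21, 90, 59, 89, 67, 47, 133, 49, 92, 3, 120] z) z z)) (s [83, 1, 131,
  111, 67] (n 141 (s [56, 57, 18, 143, 99, 140, 147, 30, 26, 73, 155, 123, 135, 110, 37, 32, 11,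
  129, 68, 54, 48, 156, 124, 34, 112, 86, 70, 36, 102] z) z (s [32, 105, 74] z) z)) (s [92, 67] (n
  121 (s [1, 85, 35, 137, 138, 89, 95, 49] z) (s [1, 82, 131, 5, 48, 129, 56, 55, 141, 136, 140, 57,
  51, 6, 18, 143, 99, 74, 30, 32, 38, 105, 123, 68, 54, 11, 91, 135, 50] z) (s [82, 1, 51, 131, 136,
  18, 5, 50, 55, 143, 56, 140, 99, 141, 80, 135, 30, 57, 11, 91, 123, 6] z) z)))))

def cert11 : Cert :=
  n 12 (s [136, 92, 51, 67] (n 6 (s [68, 32, 38, 143, 74, 99, 157, 30, 113, 140, 155, 36, 55, 57, 105,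
  86, 17, 124, 131, 83, 82, 1] z) (s [68] (n 56 z (s [129, 18, 55, 140, 54, 99, 11, 124, 147, 26,
  30, 105, 135, 110, 73, 74, 32, 40, 112, 37, 42, 77, 111] z) z (s [129] (n 99 z (s [143, 30, 17,
  73, 55, 11, 140, 54] z) (s [147, 30, 73] (n 104 (s [66, 37] z) z (n 72 (s [37, 154] z) (n 77 (s
  [148, 150, 17, 83] z) (s [40, 55, 106, 17, 150] z) (s [111, 150, 131] (n 112 (s [37, 50, 135, 11]
  z) (s [32, 156, 135, 74, 37, 26, 38, 157, 66, 154, 39, 113, 114, 79, 144, 40, 155, 118, 21, 158,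
  36, 76, 75, 115, 105, 140, 151, 55, 59, 103, 133, 62, 89, 35] z) z (s [32, 37, 74, 66, 154, 105,
  157, 4, 124, 33, 82, 101, 62, 95, 144, 1, 24, 128, 21, 138, 85, 76, 15, 103, 122, 55] z))) z) z (s
  [37, 154] z)) (s [66, 37] z))) (s [140, 143, 55, 17, 131, 150, 111, 106, 77, 66, 40, 104] z))))) z
  z)) (s [136, 56, 51, 129, 82, 110, 48, 74, 26, 32, 68, 6, 121, 1, 131, 5] (n 62 (s [35, 157, 85,
  89, 33, 118, 133, 49, 137, 120, 67, 92] z) (s [157, 67, 92] z) z (s [85, 128, 35, 67, 15, 95, 89,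
  99, 92, 157, 133, 135, 147, 30, 33, 41, 65, 8, 73, 59, 122, 93, 71, 144, 37, 50, 20, 97, 132, 11,
  98] z))) (s [57, 92, 67] (n 155 (n 14 z z (s [109, 60, 127, 30, 68, 9, 53, 124, 86, 140, 99, 54]
  z) (s [109] (n 38 z (s [74, 105, 114, 157, 36, 118, 86, 79, 140, 124, 115, 54, 40, 153, 158, 116]
  z) (n 32 z (s [74, 105, 114, 157, 36, 136, 118, 86, 79, 140, 124, 115, 55, 54, 40, 158, 153, 116]
  z) z (s [74, 114, 157, 113] (n 54 (s [99, 140] z) (s [11, 153, 124, 86] (n 41 (s [110, 158, 40,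
  75, 36, 106] z) z (s [110] (n 26 z z (n 50 (s [131, 135, 5, 111, 48] (n 37 z (s [73, 30, 68, 127,
  156, 60, 34] z) z (s [104, 154, 33, 137, 62, 49, 85, 97, 35, 89, 95, 133, 128, 138, 15, 93, 83] (n
  140 (s [99, 17, 143, 150, 68, 77, 19, 21, 156, 40, 103, 142, 34, 139, 55, 24, 2, 129, 106, 102,
  56, 58, 107, 18, 75, 145, 151, 22, 121, 59, 28, 73, 132, 98, 71] z) z z (s [99, 55, 147, 129, 56]
  z))))) (s [135, 99, 17, 143, 83, 39, 150] z) z z) (s [129, 99, 140, 55, 104, 136, 66] z))) z)) z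
  (s [99, 140] z)))) z))) (s [74, 116, 32, 105, 157, 68, 36, 30, 140, 113, 79, 115, 158, 40, 114] z)
  z z)) (s [56, 129, 110, 74, 26] (n 67 (s [99, 147] z) z (s [99, 147] z) z))

def cert12 : Cert :=
  n 100 (s [149] (n 17 (s [131, 150, 77, 83, 19] (n 5 (s [67, 92] z) z z (s [48] (n 140 z z (n 68 z (s
  [32, 38, 30, 141, 74, 57, 155] z) (n 56 z (s [129, 18, 55, 143, 103, 136, 99, 15, 12, 122, 74, 57,
  4, 155, 66, 30] z) (s [141, 92, 32, 105, 12, 74] z) (s [129, 18, 55, 143, 106, 99, 40, 30, 110,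
  74, 155, 36] z)) z) (s [55, 129, 103, 136, 15, 12, 122, 57, 92, 4, 50, 141, 67, 56, 123, 80, 44,
  11, 99, 135] z))))) (s [131, 55, 140] (n 68 z (s [38, 30, 99, 74, 143, 155, 67, 36, 92, 157, 113]
  z) (s [143, 99, 18, 67, 30, 54, 111, 92, 105] (n 112 (s [73, 77, 37, 141, 150, 66, 32, 83, 136,
  74, 12] z) (s [32, 135, 74, 141, 26, 36, 38, 157, 73, 56, 147, 155, 51, 11, 146, 12, 57, 50, 104,
  136, 124, 83, 123, 37, 91, 4, 82, 150, 6, 122, 48, 39, 121, 15, 144, 1, 128, 59, 85, 8] z) (s [37,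
  135, 77, 66, 32, 150, 136, 74, 106, 36, 114, 155] z) (s [32, 37, 135, 74, 66, 73, 104, 26, 36,
  155, 11, 147, 50, 91, 125, 156, 13, 80, 34, 102, 61, 48, 5, 134, 23, 130, 44, 81, 4, 122] z))) z))
  z (s [55, 136] (n 18 z (s [143, 67, 68, 99, 92, 38, 56, 51, 129, 12] z) z (n 68 z (s [38, 143, 67,
  99, 74, 54, 105] z) (s [143] (n 12 (s [129, 99, 57, 92, 140, 26, 141, 56, 135, 110, 147, 32, 40,
  41, 74, 114, 155, 157, 36, 30, 113, 106, 115, 66, 73, 123, 75, 158, 11, 112, 37, 79, 50, 154, 122,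
  72, 104] z) (s [56, 141, 32, 105, 57, 74, 30, 155] z) z (s [129, 57, 110, 30, 40, 155, 114, 38,
  74] z))) z))))) z (s [149] (n 141 cert11 z z (s [105] (n 157 (s [67, 92] z) (s [74] (n 75 (s [36,
  113, 155, 79, 116, 57, 158, 30, 115, 140, 86, 12, 124] z) (s [36, 140, 113, 155, 79, 116, 115, 41,
  158, 110, 32, 40, 68, 106, 114, 30, 136, 66, 55, 104] z) z (s [113, 151, 36, 39, 155, 150, 116,
  57, 106, 158, 40, 41, 114, 107, 56, 12, 129, 136, 55] z))) z (s [74, 113, 32, 38, 36, 68, 155, 30,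
  57] z))))) z

def cert13 : Cert :=
  n 153 (s [14, 54, 109, 99, 74, 12, 57] (n 34 z (s [155, 60] z) z (s [155, 60] z))) (s [54, 99, 67,
  92] (n 61 (s [34, 156] z) (n 49 (s [89, 95, 35, 33, 157, 62] z) (s [95, 128, 33, 137, 157, 85, 62,
  120] z) z (n 4 (s [66, 131, 111, 37, 73, 116, 158, 40, 41, 114, 115, 74, 155, 36] z) (s [131] (n
  11 z (s [73, 116] (n 79 z (s [158, 40, 115] z) z (n 13 (n 135 (n 104 (s [66, 40, 158, 114, 38, 74]
  z) z (s [122, 26, 50, 129, 147, 91, 125, 12, 41, 6, 156, 57, 74, 123, 34, 155, 150, 36, 113, 157]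
  (n 44 (s [80, 5, 48, 121, 1, 83, 119, 89, 35, 3, 120, 62, 33, 85, 95, 138] z) z (s [130, 23, 70,
  112] z) z)) (s [122, 146, 26, 133, 65, 89, 137, 15, 35, 128, 103, 85, 95, 24, 62, 33] z)) z (s
  [50, 91] z) z) (s [81, 125, 122, 50] z) z (s [50, 135, 91] z)))) z (s [50, 123, 135, 6, 91] z))) z
  (s [66, 122, 104, 81, 50, 37, 125, 147, 80, 44, 119, 89, 3, 133, 120, 65, 21, 137, 15, 76, 128,
  103, 85, 95, 24, 62, 33] z))) z (s [34, 156] z))) z (s [14, 109, 127, 60, 34, 155, 57, 12, 129] (n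
  114 (s [38, 74] z) (n 92 (s [67, 99, 5, 157, 66, 74, 54, 48, 118, 41, 150, 35, 116, 39, 89, 62,
  73, 33, 11, 95, 123, 49, 4, 101, 44, 133, 131, 144, 80, 50, 37, 135, 121, 125, 154, 112, 6, 59,
  79, 70, 28, 91, 113, 23, 75, 156, 126, 36, 61, 96, 86, 9, 124, 53] z) z (n 49 (s [89, 95, 35, 128,
  33, 62, 120, 157, 85, 67, 137] z) (s [95, 128, 33, 137, 85, 120, 62, 157, 67, 74, 99, 41, 66, 147,
  158, 37, 26, 40, 154, 104, 72] z) z (n 33 (s [95, 128] (n 122 z z (s [15, 65, 133, 89, 26, 35,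
  104, 76, 85, 40, 103, 62, 158, 157, 79, 118] z) (n 50 z (s [131, 4] z) (s [125] (n 9 (s [96, 61,
  126, 156, 91] z) z (s [96, 53] (n 5 (s [67, 131, 80, 99, 4, 66, 147, 54, 37, 11, 73] z) (s [67,
  131, 48, 99, 4, 121, 135, 91, 13, 126, 46, 29, 139, 2, 25, 102] (n 22 (s [66, 84] z) z z (s [66,
  84] z))) z (s [48, 121, 6, 91, 13, 156, 126, 61, 46, 29, 139, 2, 25, 84, 66, 134, 37, 102, 23, 73,
  112, 70] z))) z)) z))) (s [137, 95, 128, 85, 62, 35, 103, 120, 157, 89, 76, 24, 118, 3, 133, 69,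
  79, 119, 93, 154, 158, 81, 65, 40, 148, 122, 104, 115, 72] z) z z)) z) z z))

def cert14 : Cert :=
  n 136 z (s [55, 140] (n 57 (s [30, 68] (n 26 (s [129, 110] z) z (s [104, 66, 99, 67, 17, 54, 147,
  135, 18, 32, 56, 12, 74, 41, 110] z) (s [99, 66, 67, 17, 147, 135, 37, 32, 73, 112] z))) z (s
  [141, 30] (n 110 (s [129, 56] (n 92 (s [67, 12, 157, 99, 41, 74] z) z z (s [64, 12, 51, 18] (n 80
  (s [5, 11, 67, 123, 157, 44, 99, 74, 54, 105] z) (s [5, 11, 67, 54, 111, 157, 99, 66, 44, 143, 26,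
  123, 135, 147, 6, 32, 17, 150, 74, 39, 41, 149] (n 79 z (s [113, 158, 75, 24, 37, 69, 73, 144, 28]
  z) z (s [113, 75, 151, 105, 36, 115, 40, 158] z))) z (s [125, 50, 11, 122, 54, 104, 99, 135, 26]
  z))))) (s [32, 129, 68, 12, 99, 74, 51, 66, 38, 114] z) z z)) (s [141] (n 74 (s [105, 12, 110,
  155, 36, 149, 54, 99, 32, 106, 38, 150, 40, 68, 114, 64, 104, 143, 158, 92, 66, 79, 67, 37, 115,
  111, 118, 77, 42] z) (s [32, 110, 149, 155, 129, 64, 105, 30, 56, 150, 54, 41, 17, 99, 67, 147] z)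
  (s [12, 129, 99, 56, 110, 54, 18, 92, 41, 26, 143, 64, 104, 147, 150, 66, 67, 17, 111, 131] z) (s
  [32, 105, 149, 68, 110, 36, 54, 38, 30, 129, 86, 18, 51, 99, 12] z))))) (s [64, 149] (n 17 (s
  [131, 150, 77, 83] (n 12 (s [74, 57, 32, 68, 110, 38, 40, 114, 155, 158, 30, 79, 99, 140, 115, 42]
  z) z z (s [74, 57, 38, 68, 32, 30, 141, 99, 67, 135, 111, 112, 50, 73, 37] z))) (s [131, 55, 140]
  (n 68 z (n 66 (s [104, 30, 122, 99, 4, 26, 50, 135] z) (s [4, 111, 37, 77, 150, 32, 106, 83, 74,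
  141, 38, 110, 114, 105, 129, 40, 155, 36, 104, 158, 75, 39, 157, 41] (n 35 (s [89, 62, 119, 33,
  81, 95, 122, 128, 49, 15, 133, 65] z) z (s [118, 89, 67, 147, 92, 73, 56, 30, 12, 99, 26, 133, 49,
  33, 95] z) z)) z (s [4, 122, 104, 81, 148, 77, 150, 32, 74, 141, 99, 38, 114, 30, 155, 57] z)) (s
  [38, 143, 30, 99, 74, 155, 114] z) z)) z (s [55, 140] (n 18 z (s [143, 54, 99, 67, 92, 56, 129,
  12] z) z (n 56 z (n 141 z z (n 143 z (s [67, 68, 99, 38, 147, 74, 26, 32, 135] z) (s [68, 32] (n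
  110 (s [129, 74, 12, 26, 41, 99, 92, 147, 67] z) (n 105 (s [74, 54, 36, 38, 99, 124, 51, 12, 30,
  86, 57] z) z z (n 30 (s [99, 57, 66, 12, 155, 74, 51, 114, 38] z) z (n 51 (s [38, 6, 12, 74, 129,
  82, 99, 121, 67, 1, 48, 92, 131, 5] z) cert13 z z) z)) z z)) z) (s [57, 12, 129, 110, 32, 74, 150]
  z)) (s [141, 92, 67, 143, 157, 68, 99, 32, 74] z) z))))) (s [64, 55, 140] (n 32 z (s [68, 110,
  129, 40, 26] (n 77 (s [17, 150] z) (s [111, 67, 99, 143, 17] z) z z)) (s [68, 141] (n 18 z (s [51,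
  54, 56, 105, 12, 124] z) z (s [143] (n 74 (s [99, 105, 150, 67, 12, 151, 39, 92, 157] z) (s [99,
  110, 149, 67, 12, 17, 54, 30, 129, 111, 56, 135, 150, 11, 124, 26, 131, 39, 73, 82, 147, 157, 48,
  80, 92, 5] z) z (s [150, 39, 17, 157, 67, 92, 99, 111, 5, 54, 30, 131, 11, 57, 73, 155, 116, 153,
  34, 96, 156, 60, 9, 37, 112, 127, 50, 147, 53, 124, 125, 105, 80, 36, 151, 56, 41, 12, 107, 86,
  75, 139, 106, 40, 115, 42, 79, 118] z))))) (s [141, 150, 57] (n 105 (s [54, 18, 124, 56, 12] z) z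
  z (s [149, 74, 38, 12, 51] z)))))

def cert15 : Cert :=
  n 131 (s [111, 64, 136, 4, 50, 122, 91, 81, 6, 156, 148, 123, 77, 57, 40, 104, 106, 37, 158, 79,
  114, 116, 115, 155, 141, 36, 32, 74] z) (n 24 z (s [128, 103, 95, 62, 33, 157] z) (n 62 (s [157,
  33, 118, 95, 35, 128, 85, 1, 137, 64, 93, 136, 150, 69, 57, 39, 129, 74, 12] z) (s [103] (n 85 z z
  (s [1, 137, 138, 33, 95, 128, 49, 15, 93, 76, 83, 69, 104, 150, 129, 122, 26, 21, 65, 81, 133,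
  119, 89] z) (s [137] (n 33 (s [157, 95, 118, 128, 49, 35, 89, 133, 65, 15, 93, 76, 69, 21, 104,
  129, 26] z) z z (s [157] (n 110 (n 150 (n 138 (s [1, 95, 64, 49, 92, 120] z) z (s [1] (n 49 (s
  [120, 92, 64, 35, 89, 133, 21, 26, 76, 104] z) (s [95, 128] (n 111 (n 57 (n 116 (s [153] (n 32 z z
  (s [141, 11] (n 16 (n 147 z z (s [37, 56, 26, 50, 18, 129, 121, 125, 48, 80, 5] z) (s [37, 26,
  104, 50, 158, 121, 79, 113, 154, 72, 101, 21, 144, 59] (n 28 z z (s [75, 58, 106, 36, 74, 155] z)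
  (s [58, 106, 22, 84, 127, 9, 96, 53, 34, 124, 60, 105, 155, 149, 74] z)))) z (s [97, 52] z) (s
  [97, 52] z))) (s [141, 14, 109, 127, 9, 60, 96, 34] z))) z z (s [141, 153, 155, 14, 34, 109, 60]
  z)) z z (s [136, 64, 12, 149, 92, 129, 83, 56, 26, 15, 141, 104, 147, 65, 105, 37, 122, 74, 81,
  119, 89, 21, 101, 144] z)) z (s [77, 40, 104, 37, 154, 158, 79] z) z)) z z)) z) z (s [32, 19, 74,
  83, 38, 1, 138, 95, 49, 120, 92, 64, 12, 149, 136, 124, 57, 105, 141] z) z) (s [129, 40, 26, 147,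
  41, 74, 56, 32, 114, 149, 141, 155, 158, 105, 79, 36, 115] z) z z)))))) z (s [103, 85, 157, 1, 35,
  137, 15, 33, 138, 128, 95, 93, 49, 69, 89, 92, 129, 132, 12, 20, 28, 108] z)) (s [129, 103, 62,
  157, 33, 118, 95, 35, 128, 76, 85, 150, 1, 137, 64, 39, 49, 136, 92, 74, 12] z)) z z

def cert16 : Cert :=
  s [140] (n 15 (s [128, 103, 95] (n 150 (s [106, 17, 77, 83] (n 35 (s [62, 33, 85, 24, 157, 137, 67,
  49, 93, 111, 92, 69, 131, 64, 113, 136, 36, 12, 129, 74, 56, 110, 32, 105, 141] z) z (s [64, 85,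
  131, 89, 62, 1, 111, 119, 138, 67, 81, 92, 122, 120, 65, 49, 133] z) (s [64, 76, 85, 62, 89, 104,
  119, 40, 148, 3, 81, 110, 120, 122, 129, 92, 65, 12, 67, 133, 99, 26] z))) z (s [106, 76, 19, 83,
  17, 77, 40, 104, 21] (n 157 (s [67, 62, 33, 85, 35, 137, 64, 49, 89] z) (s [33, 67, 62, 111, 35,
  37, 118, 66, 158, 79, 30, 114, 115, 99, 68, 74, 143, 39, 155, 75, 36] z) z (s [33, 62, 35, 85,
  118, 137, 67, 79, 65, 49, 111, 115, 158, 89, 37, 133, 66, 26, 30, 99] z))) (s [76, 19, 104, 83,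
  21, 17] (n 85 z z (s [1, 64, 136] (n 6 (s [68, 32, 143, 30, 110, 99, 74] z) (s [51, 12, 18, 82,
  57, 56, 124, 123, 92, 67, 99, 5, 137, 157, 44, 143, 54, 26, 48, 33, 118, 62, 68, 11, 135, 147,
  129, 49, 35, 32, 110, 89, 141, 74, 38, 39, 41, 42, 155, 114, 97, 112, 158, 8, 37, 73, 144, 101,
  20, 132, 98, 71] z) z (s [51, 121, 82, 12, 149, 57, 38, 74, 68, 99, 110, 32, 91, 143, 26, 135,
  141, 39, 11, 144, 157, 50, 92, 37, 33, 62, 67, 112, 35, 118, 42] z))) (s [35, 62] z))))) (s [128,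
  103, 122, 95, 65, 104] (n 89 (n 62 z (n 157 (s [33, 67, 49, 137] z) z z (s [33] (n 99 z (s [67,
  17, 92, 83, 64, 150] z) (s [26, 30, 133, 66, 49, 37, 73, 147, 67, 111, 143, 92, 18, 64, 56, 131,
  149, 141, 4, 17, 50, 74, 105, 135, 11, 54] z) (s [26, 133, 49, 92, 67, 5, 137, 118, 85, 35, 64,
  76, 136, 111, 21, 131, 4, 17, 83, 50, 135, 143, 150, 12, 68, 129, 32, 110, 74, 40, 42, 77] z)))) z
  (s [35, 85] z)) z (s [133, 49, 33, 62, 157, 67, 137, 85, 35, 120, 64, 92] z) (s [133, 49, 26, 33,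
  62, 157, 67, 99, 147, 30, 66, 73, 37] z))) (s [122, 65] (n 40 (s [104, 106, 110, 129, 26, 133] (n
  17 (s [83, 148, 150, 81, 76, 119, 21, 89] z) (s [99, 77, 83, 135, 30, 150, 32, 74, 76, 68, 149,
  155, 103, 21, 143, 105, 36, 89, 18, 151, 75, 113, 157, 62, 33, 49, 95] z) z z)) (s [110, 129] (n
  74 z (n 85 z (s [128, 67, 95, 157, 33, 62] z) z (n 106 (n 68 (s [38] (n 155 (s [114] (n 57 z z (s
  [136, 30, 12, 66, 99] z) (n 64 (s [35, 136, 89, 12, 83, 17, 77, 119, 148, 81] z) z (s [35, 136,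
  89, 12, 133, 99, 26] z) (s [150, 77, 17, 83, 12, 99, 92, 42, 143, 67, 157, 118] z)))) z z (s [36,
  114, 75, 115, 158, 79, 41, 113, 157] z))) z (s [32, 38, 30, 150, 149, 77, 64, 17, 136, 131, 114,
  4, 66] z) z) z (s [36, 75, 115, 113, 158, 79] z) z)) (s [32, 150, 77, 17, 83] z) (s [32, 150, 77,
  17, 83] z))) (s [104, 106] (n 158 (n 150 z z (n 32 (s [68, 110, 74, 114, 149, 38] z) z z (n 114 z
  (s [74, 38, 149, 155, 64, 105, 116, 136, 141, 57] z) z (n 99 z (s [66, 30] z) (s [66, 30] z) (s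
  [54, 26, 133, 21, 76] (n 64 (s [35, 89] z) z z (s [149, 74, 38, 110, 68, 129, 143] (n 33 (s [157,
  95, 62, 128, 49, 85, 92, 120] z) (s [95, 128, 49, 85, 137] z) z (s [157, 67, 39, 92, 75, 12, 56,
  151, 18] z)))))))) (s [76, 103, 21, 133, 89, 64, 35, 85, 62] z)) z z (s [79, 115] z))) z)) z)

def cert17 : Cert :=
  s [55, 140] (n 66 (s [30, 99, 17, 54, 18] (n 37 z (s [73, 141, 147, 105, 56, 26, 12, 135, 110, 74,
  32] z) (s [111, 67, 147, 73, 141, 105, 56, 12, 92, 157, 74, 32, 110] z) z)) z (s [104, 30, 99, 17,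
  54, 18] (n 147 (s [67, 37, 56, 26, 111, 12, 135, 64, 131, 77, 83, 92, 112, 50, 4, 5, 40, 157, 156,
  122, 91, 125, 15, 80, 128, 65, 11, 44, 95, 137, 123, 33, 85, 93, 6, 62, 121, 35, 103, 24, 8, 76,
  19, 69, 90, 144, 150, 113, 21, 79, 118, 154, 72, 101, 115, 16, 42, 74] z) (s [67, 37, 73, 143,
  141, 68, 56, 32, 12, 92, 74, 157] z) (s [73, 56, 26, 37, 11, 135, 80, 50] z) z)) (s [104, 40, 110,
  26, 129] (n 67 (s [99, 143, 147, 30, 18, 37, 68, 51, 56, 158, 32, 12, 41, 74] z) (n 18 (s [143,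
  51, 54, 56, 99, 12] z) (n 24 z z (n 92 (s [56, 157, 12, 147, 41, 99, 74] z) z (s [64, 56, 149, 12,
  74, 51, 38] z) (s [5, 157, 48] (n 51 (s [12, 99, 82, 56, 54, 124, 141, 105] z) z z (n 72 (s [37,
  154, 33, 79, 62, 95, 113, 85, 128, 49, 69, 137, 93] z) z z (n 154 (s [37] (n 146 (s [73, 30] z) (n
  73 (s [141, 30, 32, 99, 68, 135, 156, 112] z) z (s [141, 147, 30, 99, 12, 143] (n 4 (s [50, 10,
  125, 13, 80, 130, 44] z) z (s [50, 135, 32, 11, 17, 68, 54, 131, 150, 64, 1] (n 35 (s [89, 21, 76,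
  103, 62, 33, 85, 95, 137, 138, 15, 128, 49, 93, 133, 69, 113, 79] (n 36 (s [102, 115, 134, 158,
  114, 38, 149, 74, 82, 105, 155, 121, 124, 116, 84, 153] (n 57 z z (s [86, 2, 139, 53, 9, 96, 34,
  126] z) (s [86, 139, 2, 25, 60, 34, 96, 126] z))) z (s [105, 75, 151, 28, 59] z) (s [105, 74, 155]
  z))) z z (s [85, 62, 137, 33] z))) z)) z) z z)) (s [33, 37, 79, 137, 62, 111, 118, 85, 64, 35] z)
  z z))))) (s [103, 76, 62, 35, 157, 118] z)) z z) z z)))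

def cert18 : Cert :=
  s [111] (n 38 (n 99 z (s [67, 54, 30, 68] (n 74 z z (s [150] (n 11 (s [73, 37, 66, 156, 104, 114,
  112, 40, 76, 158, 135, 106, 21, 26, 129, 12, 57, 123, 155, 101, 116, 72, 41, 115, 154, 36, 79, 75,
  39, 113, 157] z) (s [73, 37] (n 4 (s [50, 123, 135, 6, 91] z) (s [131, 5] (n 39 (n 157 z (n 62 (s
  [33, 103, 144] (n 85 z (s [1, 128, 83, 15, 76, 52, 21, 97, 16, 101] z) (s [1, 35, 137, 138, 83,
  89, 49, 95, 128, 15, 93, 20, 101, 16, 97, 52] z) (s [35, 76, 89, 21, 101, 16, 97, 123, 52, 6, 57,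
  128, 15, 90, 12, 24, 83, 8, 129, 1, 48, 121] z))) z z (s [33, 35, 95, 85, 89, 128, 15, 49, 133,
  137, 65, 93] z)) z (s [41, 92, 158, 40, 75, 106, 36, 113, 115, 79, 154, 33, 62, 95, 49, 137, 120,
  89, 85, 35] z)) (s [157, 41, 92, 158, 75, 113, 79, 154, 33, 62, 95, 49, 137, 120, 89, 85, 35] z) z
  z)) z (s [131, 122, 123, 5, 50, 44, 80] z))) z z)) (s [12, 150, 157, 83, 19, 103, 15, 62, 33, 35,
  85, 95, 89, 128, 49, 133, 137, 65, 93] z))) (s [74, 143, 30, 12, 114, 150, 68, 73, 155, 57, 39,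
  83, 147, 157, 37, 26, 123, 19, 6, 103, 144, 91, 62, 101, 50, 122, 33, 104, 10, 154, 72] z) (s [74,
  12, 54, 150, 129, 57, 124, 82] (n 37 (s [66, 73, 147, 30, 26, 68, 146, 156, 104, 112, 122, 76,
  135, 4, 21, 50, 123, 10, 101, 72] z) (s [66, 73, 11, 147, 80, 26, 50, 122, 4, 104, 10, 131, 44,
  123, 40, 72, 76, 5, 6, 158, 101, 154, 67, 48, 115, 16, 33, 121, 79, 157, 1, 118, 62, 35, 103, 85,
  128, 15, 52] z) z z))) z (s [68, 74, 143, 30, 12, 150, 99, 83, 67, 19, 157, 103, 15, 62, 33, 35,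
  85, 95, 89, 128, 49, 133, 137, 65, 93] z) z)

def cert19 : Cert :=
  s [64, 149] (n 17 (s [55, 140] (n 32 (s [141, 110] (n 56 (s [129, 18, 12, 143, 54, 99] z) (s [18] (n
  105 (n 51 z (n 77 z cert18 (s [40, 111, 148, 150, 67, 104, 74, 37, 38, 66, 73, 99, 112, 143, 156,
  68] z) z) z (s [12, 129, 82, 1, 124, 131, 83, 121, 54, 150, 48, 74, 5, 99, 67] z)) z z (s [74, 54,
  36, 99, 12, 124, 57, 86] z))) z z)) (s [110, 129, 40, 26, 77, 135, 111, 99, 67, 12, 143, 54, 30,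
  147, 68, 38, 91, 74, 150, 157, 83, 41, 1, 19, 56, 82, 103, 18, 51, 62, 6, 33, 35, 89, 133, 21,
  144, 101] z) (s [141, 150, 57, 74, 12, 110, 155, 56, 116, 41] z) z)) (s [131, 55, 140] (n 77 (n
  119 (s [83, 150, 106, 40, 110, 74, 32, 38, 68, 143, 30, 67, 99, 66, 111, 26, 37, 147] z) z (s [81,
  83, 89, 148, 35, 104, 76, 103, 15, 122, 65, 4, 133, 66, 50, 26, 111, 37, 135, 110, 99, 40, 143,
  158, 67, 79, 118] z) (s [81, 89, 148, 35, 104, 40, 76, 110, 103, 26, 129, 133, 21, 150, 32, 74,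
  19, 83, 12] z)) z (s [40, 111, 150, 110, 67, 74, 143, 32, 38, 68] z) z)) z (s [131, 150, 1, 111]
  (n 74 (s [32, 110] z) z z (n 82 (s [12, 121, 124, 48, 105, 129, 141, 56] z) z z (n 95 (s [128, 85,
  35, 138, 67, 5, 157, 92, 33, 62, 49, 120] z) (s [128] (n 33 (s [157, 67, 62, 5, 35, 92, 89, 49] z)
  z z (n 137 z (s [67, 85, 138] z) (s [49] (n 118 z (s [67, 157] z) (s [35, 76, 85, 89, 15, 67, 62,
  5, 157, 103, 92, 19, 120, 83, 3, 119] z) (s [35, 79, 89, 154, 133, 37] (n 104 (s [55, 26, 40, 129,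
  158, 12, 110, 56, 41] z) z (s [72, 148, 77, 40, 114, 115, 158] z) (s [66, 72, 76, 26, 4, 114, 15,
  110, 155, 122, 32, 129, 57, 55, 141, 140, 73, 99, 30] z))))) z))) z z)))))

def cert20 : Cert :=
  n 100 cert14 (n 55 (s [140] (n 143 (s [67, 68, 18, 99] (n 74 (s [32, 38, 110, 149, 40, 105, 106,
  114, 36, 155] z) (s [38, 110, 149, 32, 26, 129, 147, 56, 41, 141, 157, 105, 116, 92, 36, 12, 155,
  124, 57, 86] z) z (s [32, 149, 110, 150, 38, 105, 40, 64, 141, 114, 136, 155, 57, 30] z))) z (s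
  [68] (n 66 (s [99, 67, 17, 54, 30, 18] (n 92 z z (s [56, 12, 129, 136, 57, 110, 74, 32, 38, 105,
  150, 141, 114, 51, 149, 64, 155] (n 126 z (s [96, 9, 127, 109, 60] z) (s [91, 6, 156, 123, 4, 11,
  131, 73, 50, 112, 122, 77, 104, 40] z) (s [34, 14, 60, 109] z))) (s [5, 131, 64, 1, 136, 150, 57,
  83, 12] z))) (s [99, 30, 67, 54] (n 135 z (s [17] (n 73 (s [11, 141, 32, 112, 37, 104, 40, 148,
  77] z) (n 146 cert15 z z (s [104, 26] z)) z z)) (s [26, 91, 129, 6, 50, 11, 123, 57, 136, 12] z)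
  (s [11, 91, 50] z))) (s [104, 30, 37, 99, 111, 67] z) (s [104, 37, 40, 110, 26, 129] (n 135 (s
  [99, 67, 17, 147, 54, 30, 148, 73, 18, 77, 11, 56, 112, 150, 141, 32] z) (s [99, 17, 67, 148, 111,
  77] z) (s [50, 91] z) z)))) (s [17, 18, 54] (n 40 z (s [110] (n 26 z z (s [99, 135, 32, 11, 68,
  50, 91] z) (s [129] (n 82 (s [48, 149, 124, 121, 12, 1, 136, 56, 64, 92] z) (s [51, 136, 12, 83,
  1, 64, 131] z) (s [124, 12, 136, 56, 57, 141, 32, 11, 135] z) (s [48, 51, 149, 121, 38, 68, 6, 91,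
  135, 11, 50] z))))) (s [104, 106, 77, 148, 150, 81, 76, 83, 103, 21, 15, 119, 122, 89, 65, 64,
  133, 149, 26, 99, 110, 135, 74, 32] z) z)))) z z cert16) z (n 136 (s [64, 55, 140] (n 5 (s [67,
  92, 111, 157] (n 17 (s [143, 150, 99, 39, 54, 74, 18, 12, 56, 141, 147, 32, 11, 26, 135] z) z z (s
  [99, 131, 150, 12, 143, 30, 74, 66, 68, 4, 32, 50, 135] z))) (s [67, 111, 92, 157] (n 17 (s [77,
  150, 40, 148, 104, 76, 21, 89, 35, 133, 62, 33, 49, 95] z) z z (s [131, 150, 1, 77, 83, 40, 148,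
  12, 110, 99, 51, 32, 66, 74, 143, 30, 141, 104, 39, 68, 18, 155, 73, 105, 37, 122, 6, 151, 36,
  124, 144, 75, 82, 33, 21, 113, 28, 145, 121, 62, 95, 101, 76, 79, 69, 102, 48, 35, 85, 128, 154,
  158, 24, 129, 134, 72, 114, 84, 26, 10, 25, 127, 50, 60, 109, 4, 135, 11, 139, 34, 14, 123, 53,
  86, 156, 61, 9, 2, 57, 96, 126] z))) z (s [92, 67, 111, 157, 131, 118, 1] (n 50 (n 11 z (s [80,
  54, 56, 99, 18, 143] z) z (s [54, 18, 143, 99, 17, 150] (n 15 (s [128, 103, 95, 24, 33, 62, 35,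
  85, 89, 137, 49, 93, 133, 69, 129, 110, 26, 147, 41, 74, 42, 77, 40, 148, 104] z) (s [83, 12, 51,
  56, 82, 80, 147, 121, 41, 26, 6, 110, 68, 74, 32] z) (s [76, 85, 35, 137, 138, 89, 49, 33, 95] z)
  z))) z (s [4, 122] z) z)))) cert17 cert19 z)

def certRoot : Cert := (s [152, 27, 117, 45, 78] (n 31 cert6 (n 64 cert8 z (n 100 (s [149] (n 129 (s [110, 48, 26] (n 17 (s [150, 32, 68, 135, 74, 99, 105, 143, 30, 141, 18, 57, 56, 12, 147, 136, 51, 92, 67, 55, 5, 140, 80, 50, 125, 11, 121, 122, 13, 54, 82, 104, 91, 124, 40, 53, 77, 9, 42, 96, 112, 126, 156, 34, 61] z) (s [55, 140, 99, 67, 135, 74, 143, 32, 18, 141, 150, 56, 83, 12] z) z (s [55, 150, 40, 136, 74, 12, 114, 83, 38, 1, 51, 82] z))) (s [55, 136, 140] (n 18 z (n 143 z z (s [67, 68, 92, 56, 157, 12, 141, 74, 32] z) (n 68 z (s [30, 99, 17, 150, 32, 74, 110] z) (n 32 z (n 56 z z (s [141] (n 57 (s [12, 30, 51, 86, 99, 155,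 38, 74, 54, 36, 105] z) z cert9 z)) (s [141, 92, 105, 12, 74] z)) z (s [141, 150, 105, 56, 17, 54, 99, 83, 12] z)) z)) z (s [51, 56, 12, 92, 67, 143, 99, 17] z))) z (s [48, 55, 136] (n 141 z z (s [105, 56, 57, 18, 12, 54, 124] z) (n 18 z (s [51, 56, 12, 82, 124, 105, 54, 74, 140, 99] z) z (n 105 (s [54, 124, 82, 12, 51] z) z (n 67 (s [111, 92, 157, 74, 110, 150, 32, 40, 41, 26, 17, 68, 77, 38, 148, 114, 104, 66, 158, 37, 76, 154, 21, 33, 89, 62, 35] z) z (s [143, 68, 32, 74, 99, 38, 110, 150, 140, 114, 40, 26, 39, 147, 41, 157, 158, 118, 115, 116, 35, 79, 73, 62, 37, 33, 154] z) z) z)))))) z z cert10) cert12) cert20 z))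

/-- Initial state: vertices 0, 43, 88 have colour 0, 63 has colour 1, 87 has colour 2. -/
def start : Forb := ⟨nb 0 ||| nb 43 ||| nb 88, nb 63, nb 87, 0⟩

theorem check_ok : check certRoot start = true := by decide +kernel

theorem perm_exists : ∀ x y z : Fin 4, x ≠ y → x ≠ z → y ≠ z →
    ∃ e : Fin 4 → Fin 4, Function.Injective e ∧ e x = 0 ∧ e y = 1 ∧ e z = 2 := by
  intro x y z hxy hxz hyz
  refine ⟨fun i => if i = x then 0 else if i = y then 1 else if i = z then 2 else 3, ?_, ?_, ?_, ?_⟩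
  · revert x y z
    unfold Function.Injective
    decide +kernel
  · simp
  · simp [hxy.symm]
  · simp [hxz.symm, hyz.symm]

theorem no_mono (c : ℕ → Fin 4) (hc : ∀ u v, (nb v).testBit u = true → c u ≠ c v)
    (h1 : c 0 = c 43) (h2 : c 43 = c 88) : False := by
  obtain ⟨e, he, ex, ey, ez⟩ := perm_exists (c 0) (c 63) (c 87)
    (hc _ _ (by decide +kernel)) (hc _ _ (by decide +kernel)) (hc _ _ (by decide +kernel))
  have hg : ∀ u v, (nb v).testBit u = true → e (c u) ≠ e (c v) :=
    fun u v h h' => hc u v h (he h')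
  have e0 : e (c 0) = 0 := by simp_all
  have e1 : e (c 43) = 0 := by simp_all
  have e2 : e (c 88) = 0 := by simp_all
  have := check_sound (fun u => e (c u)) hg certRoot start (by
    intro u
    refine ⟨fun hu => ?_, fun hu => ey ▸ hg _ _ hu, fun hu => ez ▸ hg _ _ hu, fun hu => ?_⟩
    · simp only [start, Nat.testBit_or, Bool.or_eq_true] at hu
      rcases hu with (hu | hu) | hu
      · exact e0 ▸ hg _ _ hu
      · exact e1 ▸ hg _ _ hu
      · exact e2 ▸ hg _ _ hu
    · simp [start] at hu)
  rw [check_ok] at this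
  exact absurd this (by simp)

theorem stmt_9 :
    ∃ S : Set (EuclideanSpace ℝ (Fin 2)), S.Finite ∧ S.ncard = 159 ∧
      ∃ p ∈ S, ∃ q ∈ S, ∃ r ∈ S,
        dist p q = Real.sqrt 7 ∧ dist q r = Real.sqrt 7 ∧ dist p r = Real.sqrt 7 ∧
        (∃ c : EuclideanSpace ℝ (Fin 2) → Fin 4, (∀ x ∈ S, ∀ y ∈ S, dist x y = 1 → c x ≠ c y)) ∧
        (∀ c : EuclideanSpace ℝ (Fin 2) → Fin 4, (∀ x ∈ S, ∀ y ∈ S, dist x y = 1 → c x ≠ c y) → ¬(c p = c q ∧ c q = c r)) := by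
  refine ⟨Set.image pt (allPts.toFinset : Set Q4), (Finset.finite_toSet _).image _, ?_,
    pt (vx 0), ?_, pt (vx 43), ?_, pt (vx 88), ?_, ?_, ?_, ?_, ?_, ?_⟩
  · rw [Set.ncard_image_of_injective _ pt_injective, Set.ncard_coe_finset,
      List.toFinset_card_of_nodup nodup_all, length_all]
  · exact ⟨_, by simpa using vx_mem 0 (by norm_num), rfl⟩
  · exact ⟨_, by simpa using vx_mem 43 (by norm_num), rfl⟩
  · exact ⟨_, by simpa using vx_mem 88 (by norm_num), rfl⟩
  · exact dist_sqrt7 _ _ (by decide +kernel) (by decide +kernel)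
  · exact dist_sqrt7 _ _ (by decide +kernel) (by decide +kernel)
  · exact dist_sqrt7 _ _ (by decide +kernel) (by decide +kernel)
  · refine ⟨fun x => colour (Function.invFun pt x), ?_⟩
    rintro _ ⟨x, hx, rfl⟩ _ ⟨y, hy, rfl⟩ h
    simp only [Function.leftInverse_invFun pt_injective _]
    exact colour_proper x y (by simpa using hx) (by simpa using hy) ((dist_eq_one_iff x y).1 h)
  · rintro c hc ⟨h1, h2⟩
    refine no_mono (fun v => c (pt (vx v))) ?_ h1 h2
    intro u v h
    obtain ⟨hu, hv, huv⟩ := nb_unit u v h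
    exact hc _ ⟨_, by simpa using vx_mem u hu, rfl⟩ _ ⟨_, by simpa using vx_mem v hv, rfl⟩
      ((dist_eq_one_iff _ _).2 huv)
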